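/- Let p > q > 1 and θ_p = 2 arcsin(2√(p−1)/p). Then for every n,d ∈ ℕ with 1 ≤ d ≤ n and every function f : {-1,1}^n → ℂ of degree at most d, ‖f‖_{L_p} ≤ (((√(p−1)+√(q−1))^{π/(2π−θ_p)} + (√(p−1)−√(q−1))^{π/(2π−θ_p)}) / ((√(p−1)+√(q−1))^{π/(2π−θ_p)} − (√(p−1)−√(q−1))^{π/(2π−θ_p)}))^d · ‖f‖_{L_q}. -/

import Mathlib

open scoped BigOperators ENNReal NNReal

noncomputable section

namespace HammingCube

variable {X : Type*} [NormedAddCommGroup X] [NormedSpace ℂ X]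

/-- The sign ±1 associated to a boolean coordinate. -/
def sgn (b : Bool) : ℝ := if b then 1 else -1

/-- The Walsh function `w_A(ε) = ∏_{i ∈ A} ε_i`. -/
def walsh {n : ℕ} (A : Finset (Fin n)) (ε : Fin n → Bool) : ℝ := ∏ i ∈ A, sgn (ε i)

/-- The Fourier–Walsh coefficient `f̂(A) = 2⁻ⁿ ∑_δ f(δ) w_A(δ)`. -/
def coeff {n : ℕ} (f : (Fin n → Bool) → X) (A : Finset (Fin n)) : X :=
  (2 ^ n : ℝ)⁻¹ • ∑ δ : Fin n → Bool, walsh A δ • f δ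

/-- `f` has degree at most `d`: `f̂(A) = 0` whenever `|A| > d`. -/
def degLE {n : ℕ} (f : (Fin n → Bool) → X) (d : ℕ) : Prop :=
  ∀ A : Finset (Fin n), d < A.card → coeff f A = 0

/-- `f` belongs to the `d`-th tail space: `f̂(A) = 0` whenever `|A| < d`. -/
def tailSpace {n : ℕ} (f : (Fin n → Bool) → X) (d : ℕ) : Prop :=
  ∀ A : Finset (Fin n), A.card < d → coeff f A = 0

/-- The heat semigroup `e^{-tΔ} f = ∑_A e^{-t|A|} f̂(A) w_A`. -/
def heat {n : ℕ} (t : ℝ) (f : (Fin n → Bool) → X) : (Fin n → Bool) → X :=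
  fun ε => ∑ A : Finset (Fin n), Real.exp (-t * A.card) • walsh A ε • coeff f A

/-- The hypercube Laplacian `Δ f = ∑_A |A| f̂(A) w_A`. -/
def lap {n : ℕ} (f : (Fin n → Bool) → X) : (Fin n → Bool) → X :=
  fun ε => ∑ A : Finset (Fin n), (A.card : ℝ) • walsh A ε • coeff f A

/-- The fractional Laplacian `Δ^γ f = ∑_A |A|^γ f̂(A) w_A`. -/
def fracLap {n : ℕ} (γ : ℝ) (f : (Fin n → Bool) → X) : (Fin n → Bool) → X :=
  fun ε => ∑ A : Finset (Fin n), ((A.card : ℝ) ^ γ) • walsh A ε • coeff f A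

/-- The `i`-th discrete partial derivative. -/
def pderiv {n : ℕ} (i : Fin n) (f : (Fin n → Bool) → X) : (Fin n → Bool) → X :=
  fun ε => (2 : ℝ)⁻¹ • (f ε - f (Function.update ε i (!(ε i))))

/-- The vector-valued `L_p` norm `(2⁻ⁿ ∑_ε ‖f(ε)‖^p)^{1/p}` for finite `p`. -/
def lpNorm {n : ℕ} {Y : Type*} [NormedAddCommGroup Y] (p : ℝ)
    (f : (Fin n → Bool) → Y) : ℝ :=
  ((2 ^ n : ℝ)⁻¹ * ∑ ε : Fin n → Bool, ‖f ε‖ ^ p) ^ (1 / p)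

/-- The `L_∞` norm `max_ε ‖f(ε)‖`. -/
def linfNorm {n : ℕ} {Y : Type*} [NormedAddCommGroup Y]
    (f : (Fin n → Bool) → Y) : ℝ :=
  ⨆ ε : Fin n → Bool, ‖f ε‖

/-- The `L_p` norm for `p ∈ [1,∞]` encoded as `p : ℝ≥0∞`. -/
def lpNormE {n : ℕ} {Y : Type*} [NormedAddCommGroup Y] (p : ℝ≥0∞)
    (f : (Fin n → Bool) → Y) : ℝ :=
  if p = ⊤ then linfNorm f else lpNorm p.toReal f

/-- The scalar `L_p` norm of the gradient `‖(∑_i |∂_i f|²)^{1/2}‖_{L_p}`. -/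
def gradLpNorm {n : ℕ} (p : ℝ) (f : (Fin n → Bool) → ℂ) : ℝ :=
  lpNorm p (fun ε => Real.sqrt (∑ i : Fin n, ‖pderiv i f ε‖ ^ 2))

/-- The Rademacher projection `Rad f(ε) = ∑_i f̂({i}) ε_i`. -/
def Rad {n : ℕ} (f : (Fin n → Bool) → X) : (Fin n → Bool) → X :=
  fun ε => ∑ i : Fin n, sgn (ε i) • coeff f {i}

/-- A complex Banach space is `K`-convex if the Rademacher projections are uniformly
bounded on `L_q` for some `q ∈ (1,∞)`. -/
def KConvex (X : Type*) [NormedAddCommGroup X] [NormedSpace ℂ X] : Prop :=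
  ∃ q : ℝ, 1 < q ∧ ∃ M : ℝ, ∀ (n : ℕ) (f : (Fin n → Bool) → X),
    lpNorm q (Rad f) ≤ M * lpNorm q f

/-- `X` has cotype `q` with constant `C`. -/
def HasCotype (X : Type*) [NormedAddCommGroup X] [NormedSpace ℂ X] (q C : ℝ) : Prop :=
  ∀ (n : ℕ) (x : Fin n → X),
    C⁻¹ * (∑ i : Fin n, ‖x i‖ ^ q) ^ (1 / q) ≤
      ((2 ^ n : ℝ)⁻¹ * ∑ ε : Fin n → Bool, ‖∑ i : Fin n, sgn (ε i) • x i‖ ^ q) ^ (1 / q)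

/-- The entropy `Ent(h)` of a nonnegative function on the cube. -/
def entropy {n : ℕ} (h : (Fin n → Bool) → ℝ) : ℝ :=
  (2 ^ n : ℝ)⁻¹ * ∑ ε : Fin n → Bool, h ε * Real.log (h ε) -
    ((2 ^ n : ℝ)⁻¹ * ∑ ε : Fin n → Bool, h ε) *
      Real.log ((2 ^ n : ℝ)⁻¹ * ∑ ε : Fin n → Bool, h ε)

/-- The `L_∞` norm of the gradient `max_ε (∑_i |∂_i f(ε)|²)^{1/2}`. -/
def gradLinfNorm {n : ℕ} (f : (Fin n → Bool) → ℂ) : ℝ :=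
  ⨆ ε : Fin n → Bool, Real.sqrt (∑ i : Fin n, ‖pderiv i f ε‖ ^ 2)

/-!
By the Bonami–Beckner inequality the noise operator with parameter `r = √(q - 1) / √(p - 1)` is a
contraction from `L_q` to `L_p`, and the noise operator with parameter `(ω + 1) / (ω - 1)` is a
contraction on `L_p` when `ω` lies on either ray `re ω = -|1 - 2 / p| ‖ω‖`: these rays correspond
to the boundary of the lens of complex contractivity. By tensorization both facts reduce to the
one-dimensional cube, and by duality the second one reduces to `2 ≤ p`.

For `f` of degree at most `d` the noise operator is a polynomial of degree at most `d` in its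
parameter, and the parameter `1` recovers `f`. With `b = (2π - θ_p) / π`, the map `z ↦ z ^ b`
carries the imaginary axis onto the two rays, so the composition of this polynomial with
`z ↦ r (z ^ b + 1) / (z ^ b - 1)` is bounded by `‖f‖_q` on the imaginary axis. It has a pole of
order at most `d` at `z = 1`, which the factor `((z - 1) / (z + 1)) ^ d` of modulus one on the axis
removes. The Phragmén–Lindelöf principle in the right half-plane, evaluated at the point `s > 1`
where `r (s ^ b + 1) / (s ^ b - 1) = 1`, gives the constant `((s + 1) / (s - 1)) ^ d`.
-/

section CoshMean

variable {k : ℝ}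

/-- The weighted geometric mean `cosh(x)^k cosh(y)^(1-k)`, the right-hand side of the two-point
inequality in hyperbolic coordinates. -/
def coshMean (k x y : ℝ) : ℝ := Real.cosh x ^ k * Real.cosh y ^ (1 - k)

lemma one_le_coshMean (hk0 : 0 ≤ k) (hk1 : k ≤ 1) (x y : ℝ) : 1 ≤ coshMean k x y :=
  one_le_mul_of_one_le_of_one_le (Real.one_le_rpow (Real.one_le_cosh x) hk0)
    (Real.one_le_rpow (Real.one_le_cosh y) (sub_nonneg.2 hk1))

lemma coshMean_abs (k x y : ℝ) : coshMean k |x| |y| = coshMean k x y := by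
  simp only [coshMean, Real.cosh_abs]

lemma coshMean_neg (k x y : ℝ) : coshMean k (-x) (-y) = coshMean k x y := by
  simp only [coshMean, Real.cosh_neg]

lemma exp_le_coshMean_mul (hk0 : 0 ≤ k) (hk1 : k ≤ 1) (x y : ℝ) :
    Real.exp (k * x + (1 - k) * y) ≤ coshMean k x y *
      (k * (Real.exp x / Real.cosh x) + (1 - k) * (Real.exp y / Real.cosh y)) := by
  have hx := Real.cosh_pos x
  have hy := Real.cosh_pos y
  have amgm := Real.geom_mean_le_arith_mean2_weighted hk0 (sub_nonneg.2 hk1)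
    (by positivity : 0 ≤ Real.exp x / Real.cosh x) (by positivity : 0 ≤ Real.exp y / Real.cosh y)
    (by ring)
  calc Real.exp (k * x + (1 - k) * y)
      = coshMean k x y *
          ((Real.exp x / Real.cosh x) ^ k * (Real.exp y / Real.cosh y) ^ (1 - k)) := by
        rw [coshMean, Real.div_rpow (Real.exp_nonneg x) hx.le,
          Real.div_rpow (Real.exp_nonneg y) hy.le, ← Real.exp_mul, ← Real.exp_mul, Real.exp_add,
          mul_comm x, mul_comm y]
        field_simp
    _ ≤ _ := mul_le_mul_of_nonneg_left amgm (zero_le_one.trans (one_le_coshMean hk0 hk1 x y))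

lemma cosh_le_coshMean (hk0 : 0 ≤ k) (hk1 : k ≤ 1) (x y : ℝ) :
    Real.cosh (k * x + (1 - k) * y) ≤ coshMean k x y := by
  have hpos := exp_le_coshMean_mul hk0 hk1 x y
  have hneg := exp_le_coshMean_mul hk0 hk1 (-x) (-y)
  rw [coshMean_neg, Real.cosh_neg, Real.cosh_neg] at hneg
  have hexp (z : ℝ) : Real.exp (-z) / Real.cosh z = 2 - Real.exp z / Real.cosh z := by
    have := Real.cosh_pos z
    field_simp
    linarith [Real.cosh_eq z]
  rw [hexp, hexp] at hneg
  rw [Real.cosh_eq, neg_add, ← mul_neg, ← mul_neg]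
  linarith

lemma cosh_le_coshMean' (hk0 : 0 ≤ k) (hk1 : k ≤ 1) (x y : ℝ) :
    Real.cosh (k * x - (1 - k) * y) ≤ coshMean k x y := by
  simpa only [coshMean, mul_neg, ← sub_eq_add_neg, Real.cosh_neg] using
    cosh_le_coshMean hk0 hk1 x (-y)

lemma sub_cosh_add_mul_sub_cosh_sub {k u r : ℝ} (hr : r ^ 2 = Real.sinh u ^ 2 + k ^ 2)
    (v C : ℝ) :
    (C - Real.cosh (u + v)) * (C - Real.cosh (u - v)) = (r - k * C) ^ 2 +
      (Real.cosh v - k - (Real.cosh u - r) * C) * (Real.cosh v + k - (Real.cosh u + r) * C) := by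
  have hu := Real.cosh_sq u
  have hv := Real.cosh_sq v
  rw [Real.cosh_add, Real.cosh_sub]
  linear_combination
    (C ^ 2 - 1) * hr + (Real.cosh v ^ 2 - C ^ 2) * hu + Real.sinh u ^ 2 * hv

lemma sinh_mul_le (hk0 : 0 ≤ k) (hk1 : k ≤ 1) {y : ℝ} (hy : 0 ≤ y) :
    Real.sinh (k * y) ≤ k * Real.sinh y := by
  have hderiv (z : ℝ) : HasDerivAt (fun z ↦ k * Real.sinh z - Real.sinh (k * z))
      (k * Real.cosh z - Real.cosh (k * z) * (k * 1)) z :=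
    ((Real.hasDerivAt_sinh z).const_mul k).sub ((hasDerivAt_id z).const_mul k).sinh
  have hmono : MonotoneOn (fun z ↦ k * Real.sinh z - Real.sinh (k * z)) (Set.Ici 0) := by
    refine monotoneOn_of_hasDerivWithinAt_nonneg (convex_Ici 0)
      (fun z _ ↦ (hderiv z).continuousAt.continuousWithinAt)
      (fun z _ ↦ (hderiv z).hasDerivWithinAt) fun z _ ↦ ?_
    have hcosh : Real.cosh (k * z) ≤ Real.cosh z := by
      rw [Real.cosh_le_cosh, abs_mul, abs_of_nonneg hk0]
      exact mul_le_of_le_one_left (abs_nonneg z) hk1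
    linarith [mul_le_mul_of_nonneg_left hcosh hk0]
  have := hmono Set.self_mem_Ici hy hy
  simp only [mul_zero, Real.sinh_zero, sub_zero] at this
  linarith

lemma monotoneOn_cosh_sub_div_cosh_rpow (hk0 : 0 ≤ k) (hk1 : k ≤ 1) :
    MonotoneOn (fun y ↦ (Real.cosh ((1 - k) * y) - k) * Real.cosh y ^ (-(1 - k)))
      (Set.Ici 0) := by
  have hderiv (y : ℝ) := (((hasDerivAt_id y).const_mul (1 - k)).cosh.sub_const k).mul
    ((Real.hasDerivAt_cosh y).rpow_const (p := -(1 - k)) (.inl (Real.cosh_pos y).ne'))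
  refine monotoneOn_of_hasDerivWithinAt_nonneg (convex_Ici 0)
    (fun y _ ↦ (hderiv y).continuousAt.continuousWithinAt)
    (fun y _ ↦ (hderiv y).hasDerivWithinAt) fun y hy ↦ ?_
  rw [interior_Ici] at hy
  have hcosh := Real.cosh_pos y
  have hsinh : Real.sinh ((1 - k) * y) * Real.cosh y - Real.cosh ((1 - k) * y) * Real.sinh y =
      -Real.sinh (k * y) := by
    rw [← Real.sinh_sub, ← Real.sinh_neg]
    ring_nf
  have hfactor : 0 ≤ (1 - k) * Real.cosh y ^ (-(1 - k) - 1) *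
      (k * Real.sinh y - Real.sinh (k * y)) :=
    mul_nonneg (mul_nonneg (sub_nonneg.2 hk1) (by positivity))
      (sub_nonneg.2 (sinh_mul_le hk0 hk1 (le_of_lt hy)))
  have hrpow : Real.cosh y ^ (-(1 - k)) = Real.cosh y ^ (-(1 - k) - 1) * Real.cosh y := by
    rw [← Real.rpow_add_one hcosh.ne', sub_add_cancel]
  convert hfactor using 1
  simp only [id]
  rw [hrpow]
  linear_combination (1 - k) * Real.cosh y ^ (-(1 - k) - 1) * hsinh

lemma le_sqrt_sinh_sq_add_sq (u k : ℝ) : k ≤ √(Real.sinh u ^ 2 + k ^ 2) :=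
  Real.le_sqrt_of_sq_le (le_add_of_nonneg_left (sq_nonneg _))

lemma cosh_sub_le_of_mul_coshMean_eq (hk0 : 0 ≤ k) (hk1 : k ≤ 1) {x w r : ℝ} (hx : 0 ≤ x)
    (hw : 0 ≤ w) (hr : r ^ 2 = Real.sinh (k * x) ^ 2 + k ^ 2)
    (h : k * coshMean k x w = r) :
    Real.cosh ((1 - k) * w) - k ≤ (Real.cosh (k * x) - r) * coshMean k x w := by
  have identity := sub_cosh_add_mul_sub_cosh_sub hr ((1 - k) * w) (coshMean k x w)
  set C := coshMean k x w
  have hC : 1 ≤ C := one_le_coshMean hk0 hk1 x w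
  have hu : 1 ≤ Real.cosh (k * x) := Real.one_le_cosh _
  have hv : 1 ≤ Real.cosh ((1 - k) * w) := Real.one_le_cosh _
  have hle : Real.cosh (k * x + (1 - k) * w) ≤ C := cosh_le_coshMean hk0 hk1 x w
  have hle' : Real.cosh (k * x - (1 - k) * w) ≤ C := cosh_le_coshMean' hk0 hk1 x w
  have huv : Real.cosh (k * x) * Real.cosh ((1 - k) * w) ≤ C := by
    refine le_trans ?_ hle
    rw [Real.cosh_add]
    exact le_add_of_nonneg_right (mul_nonneg (Real.sinh_nonneg_iff.2 (mul_nonneg hk0 hx))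
      (Real.sinh_nonneg_iff.2 (mul_nonneg (sub_nonneg.2 hk1) hw)))
  have hprod := mul_nonneg (sub_nonneg.2 hle) (sub_nonneg.2 hle')
  rw [identity, h, sub_self] at hprod
  generalize Real.cosh (k * x) = a at *
  generalize Real.cosh ((1 - k) * w) = b at *
  by_contra! hlt
  have hfactor : 0 ≤ b + k - (a + r) * C := by
    refine le_of_not_gt fun hneg ↦ ?_
    linarith [mul_neg_of_pos_of_neg (sub_pos.2 hlt) hneg]
  have hbC : b ≤ C := (le_mul_of_one_le_left (by linarith) hu).trans huv
  have haC : C ≤ a * C := le_mul_of_one_le_left (by linarith) hu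
  linarith

lemma exists_mul_coshMean_eq (hk0 : 0 < k) (hk1 : k < 1) {x y r : ℝ} (hy : 0 ≤ y)
    (h : k * coshMean k x y ≤ r) : ∃ w, y ≤ w ∧ k * coshMean k x w = r := by
  have hl : 0 < 1 - k := sub_pos.2 hk1
  have hx : 0 < k * Real.cosh x ^ k := by positivity
  have hratio : Real.cosh y ^ (1 - k) ≤ r / (k * Real.cosh x ^ k) := by
    rwa [le_div_iff₀ hx, mul_comm, mul_assoc]
  have hratio_nonneg : 0 ≤ r / (k * Real.cosh x ^ k) := le_trans (by positivity) hratio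
  have hle : Real.cosh y ≤ (r / (k * Real.cosh x ^ k)) ^ (1 - k)⁻¹ :=
    (Real.le_rpow_inv_iff_of_pos (by positivity) hratio_nonneg hl).2 hratio
  have hone := (Real.one_le_cosh y).trans hle
  refine ⟨Real.arcosh ((r / (k * Real.cosh x ^ k)) ^ (1 - k)⁻¹), ?_, ?_⟩
  · rwa [← Real.cosh_arcosh hone, Real.cosh_le_cosh, abs_of_nonneg hy,
      abs_of_nonneg (Real.arcosh_nonneg hone)] at hle
  · rw [coshMean, Real.cosh_arcosh hone, Real.rpow_inv_rpow hratio_nonneg hl.ne', ← mul_assoc,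
      mul_div_cancel₀ _ hx.ne']

lemma cosh_sub_le_of_mul_coshMean_le (hk0 : 0 < k) (hk1 : k < 1) (x y : ℝ)
    (h : k * coshMean k x y ≤ √(Real.sinh (k * x) ^ 2 + k ^ 2)) :
    Real.cosh ((1 - k) * y) - k ≤
      (Real.cosh (k * x) - √(Real.sinh (k * x) ^ 2 + k ^ 2)) * coshMean k x y := by
  wlog hxy : 0 ≤ x ∧ 0 ≤ y generalizing x y
  · have habs {a : ℝ} (ha : 0 ≤ a) (z : ℝ) : a * |z| = |a * z| := by rw [abs_mul, abs_of_nonneg ha]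
    have := this |x| |y|
    simp only [coshMean_abs, habs hk0.le, habs (sub_nonneg.2 hk1.le), Real.cosh_abs,
      ← Real.abs_sinh, sq_abs, abs_nonneg, and_self, forall_true_left] at this
    exact this h
  obtain ⟨hx, hy⟩ := hxy
  set r := √(Real.sinh (k * x) ^ 2 + k ^ 2)
  obtain ⟨w, hyw, hw⟩ := exists_mul_coshMean_eq hk0 hk1 hy h
  have hthreshold := cosh_sub_le_of_mul_coshMean_eq hk0.le hk1.le hx (hy.trans hyw)
    (Real.sq_sqrt (by positivity)) hw
  have hquot (z : ℝ) : Real.cosh ((1 - k) * z) - k ≤ (Real.cosh (k * x) - r) * coshMean k x z ↔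
      (Real.cosh ((1 - k) * z) - k) * Real.cosh z ^ (-(1 - k)) ≤
        (Real.cosh (k * x) - r) * Real.cosh x ^ k := by
    rw [Real.rpow_neg (Real.cosh_pos z).le, ← div_eq_mul_inv, div_le_iff₀ (by positivity), coshMean,
      mul_assoc]
  exact (hquot y).2 ((monotoneOn_cosh_sub_div_cosh_rpow hk0.le hk1.le hy (hy.trans hyw) hyw).trans
    ((hquot w).1 hthreshold))

lemma two_mul_le_of_sq_le_mul {s P Q : ℝ} (hP : 0 ≤ P) (hQ : 0 ≤ Q) (h : s ^ 2 ≤ P * Q) (t : ℝ) :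
    2 * t * s ≤ t ^ 2 * P + Q := by
  refine abs_le_of_sq_le_sq' ?_ (by positivity) |>.2
  nlinarith [sq_nonneg (t ^ 2 * P - Q), mul_le_mul_of_nonneg_left h (sq_nonneg t)]

lemma cosh_lens_inequality (hk0 : 0 ≤ k) (hk1 : k < 1) {t : ℝ} (ht : 0 ≤ t) (x y : ℝ) :
    t ^ 2 * Real.cosh (k * x + (1 - k) * y) + Real.cosh (k * x - (1 - k) * y) +
      2 * t * √(Real.sinh (k * x) ^ 2 + k ^ 2) ≤ (1 + t ^ 2 + 2 * k * t) * coshMean k x y := by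
  have hP := sub_nonneg.2 (cosh_le_coshMean hk0 hk1.le x y)
  have hQ := sub_nonneg.2 (cosh_le_coshMean' hk0 hk1.le x y)
  suffices 2 * t * (√(Real.sinh (k * x) ^ 2 + k ^ 2) - k * coshMean k x y) ≤
      t ^ 2 * (coshMean k x y - Real.cosh (k * x + (1 - k) * y)) +
        (coshMean k x y - Real.cosh (k * x - (1 - k) * y)) by linarith
  rcases le_total (√(Real.sinh (k * x) ^ 2 + k ^ 2)) (k * coshMean k x y) with hle | hle
  · exact (mul_nonpos_of_nonneg_of_nonpos (by positivity) (sub_nonpos.2 hle)).trans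
      (add_nonneg (mul_nonneg (sq_nonneg t) hP) hQ)
  rcases hk0.eq_or_lt with rfl | hk0
  · simp only [zero_mul, Real.sinh_zero, ne_eq, OfNat.ofNat_ne_zero, not_false_eq_true, zero_pow,
      add_zero, Real.sqrt_zero, sub_zero, mul_zero] at hP hQ ⊢
    exact add_nonneg (mul_nonneg (sq_nonneg t) hP) hQ
  refine two_mul_le_of_sq_le_mul hP hQ ?_ t
  rw [sub_cosh_add_mul_sub_cosh_sub (Real.sq_sqrt (by positivity)), le_add_iff_nonneg_right]
  have hfst := cosh_sub_le_of_mul_coshMean_le hk0 hk1 x y hle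
  have hkr := le_sqrt_sinh_sq_add_sq (k * x) k
  refine mul_nonneg_of_nonpos_of_nonpos (sub_nonpos.2 hfst) ?_
  have hrC := le_mul_of_one_le_right (hk0.le.trans hkr) (one_le_coshMean hk0.le hk1.le x y)
  linarith

end CoshMean

section LensInequality

variable {k : ℝ}

lemma exists_exp_add_exp_sub {a b : ℝ} (ha : 0 < a) (hb : 0 < b) :
    ∃ g x, a = Real.exp (g + x) ∧ b = Real.exp (g - x) := by
  refine ⟨(Real.log a + Real.log b) / 2, (Real.log a - Real.log b) / 2, ?_, ?_⟩
  · rw [← add_div, add_add_sub_cancel, add_self_div_two, Real.exp_log ha]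
  · rw [← sub_div, add_sub_sub_cancel, add_self_div_two, Real.exp_log hb]

lemma exp_add_rpow (g x s : ℝ) :
    Real.exp (g + x) ^ s = Real.exp (s * g) * Real.exp (s * x) := by
  rw [← Real.exp_mul, ← Real.exp_add, add_mul, mul_comm g, mul_comm x]

lemma exp_sub_rpow (g x s : ℝ) :
    Real.exp (g - x) ^ s = Real.exp (s * g) * (Real.exp (s * x))⁻¹ := by
  rw [sub_eq_add_neg, exp_add_rpow, mul_neg, Real.exp_neg]

lemma exp_add_add_exp_sub_rpow (g x s : ℝ) :
    (Real.exp (g + x) + Real.exp (g - x)) ^ s = 2 ^ s * Real.exp (s * g) * Real.cosh x ^ s := by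
  have hsum : Real.exp (g + x) + Real.exp (g - x) = 2 * Real.exp g * Real.cosh x := by
    rw [Real.cosh_eq, Real.exp_add, sub_eq_add_neg, Real.exp_add]
    ring
  rw [hsum, Real.mul_rpow (by positivity) (Real.cosh_pos x).le,
    Real.mul_rpow zero_le_two (Real.exp_nonneg g), ← Real.exp_mul, mul_comm g]

lemma sqrt_exp_eq_sqrt_sinh {A : ℝ} (hA : 0 ≤ A) (k z : ℝ) :
    √((A * Real.exp z - A * (Real.exp z)⁻¹) ^ 2 +
        4 * k ^ 2 * (A * Real.exp z * (A * (Real.exp z)⁻¹))) =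
      2 * A * √(Real.sinh z ^ 2 + k ^ 2) := by
  rw [← Real.sqrt_sq (by positivity : 0 ≤ 2 * A), ← Real.sqrt_mul (sq_nonneg _), Real.sinh_eq,
    Real.exp_neg]
  have := Real.exp_pos z
  congr 1
  field_simp
  ring

lemma rpow_lens_inequality_of_pos (hk0 : 0 ≤ k) (hk1 : k < 1) {t a b c d : ℝ} (ht : 0 ≤ t)
    (ha : 0 < a) (hb : 0 < b) (hc : 0 < c) (hd : 0 < d) :
    t ^ 2 * (a ^ k * c ^ (1 - k) + b ^ k * d ^ (1 - k)) +
        (a ^ k * d ^ (1 - k) + b ^ k * c ^ (1 - k)) +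
        2 * (t * √((a ^ k - b ^ k) ^ 2 + 4 * k ^ 2 * (a ^ k * b ^ k))) *
          √(c ^ (1 - k) * d ^ (1 - k)) ≤
      (1 + t ^ 2 + 2 * k * t) * ((a + b) ^ k * (c + d) ^ (1 - k)) := by
  obtain ⟨g, x, rfl, rfl⟩ := exists_exp_add_exp_sub ha hb
  obtain ⟨h, y, rfl, rfl⟩ := exists_exp_add_exp_sub hc hd
  have htwo : (2 : ℝ) ^ k * 2 ^ (1 - k) = 2 := by
    rw [← Real.rpow_add two_pos, add_sub_cancel, Real.rpow_one]
  have hsqrt : √(Real.exp (h + y) ^ (1 - k) * Real.exp (h - y) ^ (1 - k)) =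
      Real.exp ((1 - k) * h) := by
    rw [exp_add_rpow, exp_sub_rpow, mul_mul_mul_comm, mul_inv_cancel₀ (Real.exp_ne_zero _), mul_one,
      Real.sqrt_mul_self (Real.exp_nonneg _)]
  have hscaled := mul_le_mul_of_nonneg_left (cosh_lens_inequality hk0 hk1 ht x y)
    (by positivity : 0 ≤ 2 * Real.exp (k * g) * Real.exp ((1 - k) * h))
  rw [hsqrt, exp_add_add_exp_sub_rpow, exp_add_add_exp_sub_rpow, exp_add_rpow, exp_add_rpow,
    exp_sub_rpow, exp_sub_rpow, sqrt_exp_eq_sqrt_sinh (Real.exp_nonneg _)]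
  rw [Real.cosh_eq, Real.cosh_eq] at hscaled
  simp only [neg_add, sub_eq_add_neg, Real.exp_add, Real.exp_neg, inv_inv, coshMean] at hscaled ⊢
  linear_combination hscaled - (1 + t ^ 2 + 2 * k * t) * Real.exp (k * g) *
    Real.exp ((1 + -k) * h) * Real.cosh x ^ k * Real.cosh y ^ (1 + -k) * htwo

lemma rpow_lens_inequality (hk0 : 0 ≤ k) (hk1 : k < 1) {t a b c d : ℝ} (ht : 0 ≤ t)
    (ha : 0 ≤ a) (hb : 0 ≤ b) (hc : 0 ≤ c) (hd : 0 ≤ d) :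
    t ^ 2 * (a ^ k * c ^ (1 - k) + b ^ k * d ^ (1 - k)) +
        (a ^ k * d ^ (1 - k) + b ^ k * c ^ (1 - k)) +
        2 * (t * √((a ^ k - b ^ k) ^ 2 + 4 * k ^ 2 * (a ^ k * b ^ k))) *
          √(c ^ (1 - k) * d ^ (1 - k)) ≤
      (1 + t ^ 2 + 2 * k * t) * ((a + b) ^ k * (c + d) ^ (1 - k)) := by
  have hk1' : 0 ≤ 1 - k := sub_nonneg.2 hk1.le
  have hclosed := isClosed_le
    (f := fun δ ↦ t ^ 2 * ((a + δ) ^ k * (c + δ) ^ (1 - k) + (b + δ) ^ k * (d + δ) ^ (1 - k)) +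
        ((a + δ) ^ k * (d + δ) ^ (1 - k) + (b + δ) ^ k * (c + δ) ^ (1 - k)) +
        2 * (t * √(((a + δ) ^ k - (b + δ) ^ k) ^ 2 + 4 * k ^ 2 * ((a + δ) ^ k * (b + δ) ^ k))) *
          √((c + δ) ^ (1 - k) * (d + δ) ^ (1 - k)))
    (g := fun δ ↦ (1 + t ^ 2 + 2 * k * t) *
      ((a + δ + (b + δ)) ^ k * (c + δ + (d + δ)) ^ (1 - k)))
    (by fun_prop (disch := assumption)) (by fun_prop (disch := assumption))
  have hmem : (0 : ℝ) ∈ closure (Set.Ioi 0) := by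
    rw [closure_Ioi]
    exact Set.self_mem_Ici
  have hzero := hclosed.closure_subset_iff.2 (fun δ hδ ↦ rpow_lens_inequality_of_pos hk0 hk1 ht
    (add_pos_of_nonneg_of_pos ha hδ) (add_pos_of_nonneg_of_pos hb hδ)
    (add_pos_of_nonneg_of_pos hc hδ) (add_pos_of_nonneg_of_pos hd hδ)) hmem
  simpa only [Set.mem_ofPred_eq, add_zero] using hzero

end LensInequality

section TwoPoint

variable {E : Type*} [NormedAddCommGroup E] [InnerProductSpace ℂ E]

lemma norm_real_mul_conj_add {k : ℝ} {ζ : ℂ} (hζ : ζ.re = k * ‖ζ‖) {α β : ℝ}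
    (hα : 0 ≤ α) (hβ : 0 ≤ β) :
    ‖α * starRingEnd ℂ ζ + β * ζ‖ = ‖ζ‖ * √((α - β) ^ 2 + 4 * k ^ 2 * (α * β)) := by
  have hnorm := Complex.sq_norm ζ
  rw [Complex.normSq_apply] at hnorm
  rw [← sq_eq_sq₀ (norm_nonneg _) (by positivity), mul_pow, Real.sq_sqrt (by positivity),
    Complex.sq_norm, Complex.normSq_apply]
  simp only [Complex.add_re, Complex.add_im, Complex.re_ofReal_mul, Complex.im_ofReal_mul,
    Complex.conj_re, Complex.conj_im]
  linear_combination 4 * α * β * (ζ.re + k * ‖ζ‖) * hζ - (α - β) ^ 2 * hnorm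

lemma weighted_norm_sq_le {α β : ℝ} (ζ : ℂ) (x y : E) :
    α * ‖ζ • x + y‖ ^ 2 + β * ‖x + ζ • y‖ ^ 2 ≤
      ‖ζ‖ ^ 2 * (α * ‖x‖ ^ 2 + β * ‖y‖ ^ 2) + (α * ‖y‖ ^ 2 + β * ‖x‖ ^ 2) +
        2 * ‖α * starRingEnd ℂ ζ + β * ζ‖ * (‖x‖ * ‖y‖) := by
  have hcross : ((α * starRingEnd ℂ ζ + β * ζ) * inner ℂ x y).re ≤
      ‖α * starRingEnd ℂ ζ + β * ζ‖ * (‖x‖ * ‖y‖) :=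
    (Complex.re_le_norm _).trans ((norm_mul_le _ _).trans
      (mul_le_mul_of_nonneg_left (norm_inner_le_norm x y) (norm_nonneg _)))
  rw [add_mul, mul_assoc, mul_assoc, Complex.add_re, Complex.re_ofReal_mul,
    Complex.re_ofReal_mul] at hcross
  rw [norm_add_sq (𝕜 := ℂ), norm_add_sq (𝕜 := ℂ), inner_smul_left, inner_smul_right, norm_smul,
    norm_smul]
  simp only [RCLike.re_to_complex]
  linarith

lemma norm_one_add_sq {k : ℝ} {ζ : ℂ} (hζ : ζ.re = k * ‖ζ‖) :
    ‖1 + ζ‖ ^ 2 = 1 + ‖ζ‖ ^ 2 + 2 * k * ‖ζ‖ := by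
  rw [Complex.sq_norm, Complex.sq_norm, Complex.normSq_apply, Complex.normSq_apply]
  simp only [Complex.add_re, Complex.add_im, Complex.one_re, Complex.one_im]
  linear_combination 2 * hζ

lemma rpow_mul_rpow_one_sub {a : ℝ} (ha : 0 ≤ a) (k : ℝ) : a ^ k * a ^ (1 - k) = a := by
  rw [← Real.rpow_of_add_eq ha one_ne_zero (add_sub_cancel k 1), Real.rpow_one]

lemma le_rpow_mul_of_le_mul_rpow_mul_rpow {k U V M : ℝ} (hk : k < 1) (hU : 0 ≤ U) (hV : 0 ≤ V)
    (hM : 0 ≤ M) (h : U ≤ M * (U ^ k * V ^ (1 - k))) : U ≤ M ^ (1 - k)⁻¹ * V := by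
  rcases hU.eq_or_lt with rfl | hU
  · positivity
  have hl : 0 < 1 - k := sub_pos.2 hk
  have hcancel : U ^ (1 - k) ≤ M * V ^ (1 - k) := by
    refine le_of_mul_le_mul_left ?_ (Real.rpow_pos_of_pos hU k)
    rwa [rpow_mul_rpow_one_sub hU.le, mul_left_comm]
  rwa [← Real.le_rpow_inv_iff_of_pos hU.le (by positivity) hl,
    Real.mul_rpow hM (by positivity), Real.rpow_rpow_inv hV hl.ne'] at hcancel

theorem norm_rpow_add_le_of_re_eq {p : ℝ} (hp : 2 ≤ p) {ζ : ℂ} (hζ : ζ.re = (1 - 2 / p) * ‖ζ‖)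
    (x y : E) :
    ‖ζ • x + y‖ ^ p + ‖x + ζ • y‖ ^ p ≤ ‖1 + ζ‖ ^ p * (‖x‖ ^ p + ‖y‖ ^ p) := by
  have hp0 : 0 < p := two_pos.trans_le hp
  have hk0 : 0 ≤ 1 - 2 / p := sub_nonneg.2 ((div_le_one hp0).2 hp)
  have hk1 : 1 - 2 / p < 1 := sub_lt_self 1 (by positivity)
  have hsq (z : E) : (‖z‖ ^ p) ^ (1 - (1 - 2 / p)) = ‖z‖ ^ 2 := by
    rw [sub_sub_cancel, ← Real.rpow_mul (norm_nonneg z), mul_div_cancel₀ _ hp0.ne', Real.rpow_two]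
  have hsplit (z : E) : (‖z‖ ^ p) ^ (1 - 2 / p) * ‖z‖ ^ 2 = ‖z‖ ^ p := by
    rw [← hsq, rpow_mul_rpow_one_sub (by positivity)]
  have hlens := rpow_lens_inequality hk0 hk1 (norm_nonneg ζ)
    (by positivity : 0 ≤ ‖ζ • x + y‖ ^ p) (by positivity : 0 ≤ ‖x + ζ • y‖ ^ p)
    (by positivity : 0 ≤ ‖x‖ ^ p) (by positivity : 0 ≤ ‖y‖ ^ p)
  have hweighted := weighted_norm_sq_le (α := (‖ζ • x + y‖ ^ p) ^ (1 - 2 / p))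
    (β := (‖x + ζ • y‖ ^ p) ^ (1 - 2 / p)) ζ x y
  rw [hsplit, hsplit, norm_real_mul_conj_add hζ (by positivity) (by positivity)] at hweighted
  rw [← norm_one_add_sq hζ] at hlens
  rw [hsq x, hsq y, ← mul_pow, Real.sqrt_sq (by positivity)] at hlens
  have hroot := le_rpow_mul_of_le_mul_rpow_mul_rpow hk1 (by positivity) (by positivity)
    (sq_nonneg ‖1 + ζ‖) (hweighted.trans hlens)
  rwa [sub_sub_cancel, inv_div, ← Real.rpow_two, ← Real.rpow_mul (norm_nonneg _),
    mul_div_cancel₀ _ two_ne_zero] at hroot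

end TwoPoint

section Bonami

/-- Twice the even part of `y ↦ (1 + y) ^ s`. -/
def evenPow (s y : ℝ) : ℝ := (1 + y) ^ s + (1 - y) ^ s

/-- Twice the odd part of `y ↦ (1 + y) ^ s`. -/
def oddPow (s y : ℝ) : ℝ := (1 + y) ^ s - (1 - y) ^ s

lemma hasDerivAt_one_add_rpow (s : ℝ) {y : ℝ} (hy : -1 < y) :
    HasDerivAt (fun y ↦ (1 + y) ^ s) (s * (1 + y) ^ (s - 1)) y := by
  simpa using ((hasDerivAt_id y).const_add 1).rpow_const (p := s) (.inl (by simp; linarith))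

lemma hasDerivAt_one_sub_rpow (s : ℝ) {y : ℝ} (hy : y < 1) :
    HasDerivAt (fun y ↦ (1 - y) ^ s) (-(s * (1 - y) ^ (s - 1))) y := by
  simpa using ((hasDerivAt_id y).const_sub 1).rpow_const (p := s) (.inl (by simp; linarith))

lemma hasDerivAt_evenPow (s : ℝ) {y : ℝ} (hy : y ∈ Set.Ioo (-1) 1) :
    HasDerivAt (evenPow s) (s * oddPow (s - 1) y) y := by
  rw [oddPow, mul_sub, sub_eq_add_neg]
  exact (hasDerivAt_one_add_rpow s hy.1).add (hasDerivAt_one_sub_rpow s hy.2)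

lemma hasDerivAt_oddPow (s : ℝ) {y : ℝ} (hy : y ∈ Set.Ioo (-1) 1) :
    HasDerivAt (oddPow s) (s * evenPow (s - 1) y) y := by
  rw [evenPow, mul_add, ← sub_neg_eq_add]
  exact (hasDerivAt_one_add_rpow s hy.1).sub (hasDerivAt_one_sub_rpow s hy.2)

lemma continuous_evenPow {s : ℝ} (hs : 0 ≤ s) : Continuous (evenPow s) := by
  unfold evenPow
  fun_prop (disch := assumption)

lemma evenPow_zero (s : ℝ) : evenPow s 0 = 2 := by
  rw [evenPow, add_zero, sub_zero, Real.one_rpow, one_add_one_eq_two]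

lemma oddPow_zero (s : ℝ) : oddPow s 0 = 0 := by
  rw [oddPow, add_zero, sub_zero, sub_self]

lemma evenPow_nonneg (s : ℝ) {y : ℝ} (hy : y ∈ Set.Icc (-1) 1) : 0 ≤ evenPow s y :=
  add_nonneg (Real.rpow_nonneg (neg_le_iff_add_nonneg'.1 hy.1) s)
    (Real.rpow_nonneg (sub_nonneg.2 hy.2) s)

lemma monotoneOn_evenPow {s : ℝ} (hs : s ≤ 0) : MonotoneOn (evenPow s) (Set.Ico 0 1) := by
  have hderiv (y : ℝ) (hy : y ∈ Set.Ico (0 : ℝ) 1) :=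
    hasDerivAt_evenPow s ⟨by linarith [hy.1], hy.2⟩
  refine monotoneOn_of_hasDerivWithinAt_nonneg (convex_Ico 0 1)
    (fun y hy ↦ (hderiv y hy).continuousAt.continuousWithinAt)
    (fun y hy ↦ (hderiv y (interior_subset hy)).hasDerivWithinAt) fun y hy ↦ ?_
  obtain ⟨hy0, hy1⟩ := interior_subset hy
  exact mul_nonneg_of_nonpos_of_nonpos hs (sub_nonpos.2
    (Real.rpow_le_rpow_of_nonpos (by linarith) (by linarith) (by linarith)))

-- Since `a ^ (-c) ≥ 1 - c log a`, it suffices that `∑ (1 ± y) ^ s log (1 ± y) ≤ log (1 - y²) ≤ 0`.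
lemma evenPow_le_of_exponent_le {s s' y : ℝ} (hs : s ≤ 0) (hss' : s' ≤ s)
    (hy : y ∈ Set.Ico 0 1) : evenPow s y ≤ evenPow s' y := by
  obtain ⟨hy0, hy1⟩ := hy
  have hadd : 0 < 1 + y := by linarith
  have hsub : 0 < 1 - y := by linarith
  have hterm {a : ℝ} (ha : 0 < a) : a ^ s - (s - s') * (a ^ s * Real.log a) ≤ a ^ s' := by
    have hexp : 1 - (s - s') * Real.log a ≤ a ^ (s' - s) := by
      rw [Real.rpow_def_of_pos ha]
      linarith [Real.add_one_le_exp (Real.log a * (s' - s))]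
    calc a ^ s - (s - s') * (a ^ s * Real.log a) = a ^ s * (1 - (s - s') * Real.log a) := by ring
      _ ≤ a ^ s * a ^ (s' - s) := mul_le_mul_of_nonneg_left hexp (by positivity)
      _ = a ^ s' := by rw [← Real.rpow_add ha, add_sub_cancel]
  have hlog_add : (1 + y) ^ s * Real.log (1 + y) ≤ Real.log (1 + y) :=
    mul_le_of_le_one_left (Real.log_nonneg (by linarith))
      (Real.rpow_le_one_of_one_le_of_nonpos (by linarith) hs)
  have hlog_sub : (1 - y) ^ s * Real.log (1 - y) ≤ Real.log (1 - y) :=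
    (mul_le_mul_of_nonpos_right (Real.one_le_rpow_of_pos_of_le_one_of_nonpos hsub (by linarith) hs)
      (Real.log_nonpos hsub.le (by linarith))).trans_eq (one_mul _)
  have hlog : Real.log (1 + y) + Real.log (1 - y) ≤ 0 := by
    rw [← Real.log_mul hadd.ne' hsub.ne']
    exact Real.log_nonpos (by positivity) (by nlinarith)
  have := mul_nonpos_of_nonneg_of_nonpos (sub_nonneg.2 hss')
    ((add_le_add hlog_add hlog_sub).trans hlog)
  unfold evenPow
  linarith [hterm hadd, hterm hsub]

variable {p q r : ℝ}

lemma le_one_of_sq_mul_eq (hq : 1 < q) (hqp : q ≤ p) (hr : r ^ 2 * (p - 1) = q - 1) :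
    r ≤ 1 := by
  by_contra! h
  nlinarith [mul_pos (sub_pos.2 h) (sub_pos.2 (hq.trans_le hqp))]

lemma mul_oddPow_le (hq : 1 < q) (hqp : q ≤ p) (hp : p ≤ 2) (hr0 : 0 ≤ r)
    (hr : r ^ 2 * (p - 1) = q - 1) {y : ℝ} (hy : y ∈ Set.Ico 0 1) :
    r * oddPow (p - 1) (r * y) ≤ oddPow (q - 1) y := by
  have hr1 := le_one_of_sq_mul_eq hq hqp hr
  have hmem {z : ℝ} (hz : z ∈ Set.Ico (0 : ℝ) 1) : r * z ∈ Set.Ico (0 : ℝ) 1 :=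
    ⟨mul_nonneg hr0 hz.1, (mul_le_of_le_one_left hz.1 hr1).trans_lt hz.2⟩
  have hIoo {z : ℝ} (hz : z ∈ Set.Ico (0 : ℝ) 1) : z ∈ Set.Ioo (-1 : ℝ) 1 :=
    ⟨neg_one_lt_zero.trans_le hz.1, hz.2⟩
  have hderiv (z : ℝ) (hz : z ∈ Set.Ico (0 : ℝ) 1) :=
    (hasDerivAt_oddPow (q - 1) (hIoo hz)).sub
      (((hasDerivAt_oddPow (p - 1) (hIoo (hmem hz))).comp z (hasDerivAt_const_mul r)).const_mul r)
  have hmono : MonotoneOn (fun z ↦ oddPow (q - 1) z - r * oddPow (p - 1) (r * z))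
      (Set.Ico 0 1) := by
    refine monotoneOn_of_hasDerivWithinAt_nonneg (convex_Ico 0 1)
      (fun z hz ↦ (hderiv z hz).continuousAt.continuousWithinAt)
      (fun z hz ↦ (hderiv z (interior_subset hz)).hasDerivWithinAt) fun z hz ↦ ?_
    replace hz := interior_subset hz
    have hle : evenPow (p - 1 - 1) (r * z) ≤ evenPow (q - 1 - 1) z :=
      (monotoneOn_evenPow (by linarith) (hmem hz) hz (mul_le_of_le_one_left hz.1 hr1)).trans
        (evenPow_le_of_exponent_le (by linarith) (by linarith) hz)
    linear_combination (q - 1) * hle + evenPow (p - 1 - 1) (r * z) * hr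
  have := hmono ⟨le_rfl, one_pos⟩ hy hy.1
  simp only [oddPow_zero, mul_zero, sub_self] at this
  exact sub_nonneg.1 this

lemma evenPow_sub_two_le (hq : 1 < q) (hqp : q ≤ p) (hp : p ≤ 2) (hr0 : 0 ≤ r)
    (hr : r ^ 2 * (p - 1) = q - 1) {y : ℝ} (hy : y ∈ Set.Icc 0 1) :
    evenPow p (r * y) - 2 ≤ p / q * (evenPow q y - 2) := by
  have hr1 := le_one_of_sq_mul_eq hq hqp hr
  have hderiv (z : ℝ) (hz : z ∈ Set.Ioo (0 : ℝ) 1) :=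
    (((hasDerivAt_evenPow q ⟨neg_one_lt_zero.trans hz.1, hz.2⟩).sub_const 2).const_mul (p / q)).sub
      (((hasDerivAt_evenPow p ⟨neg_one_lt_zero.trans_le (mul_nonneg hr0 hz.1.le),
        (mul_le_of_le_one_left hz.1.le hr1).trans_lt hz.2⟩).comp z
          (hasDerivAt_const_mul r)).sub_const 2)
  have hmono : MonotoneOn (fun z ↦ p / q * (evenPow q z - 2) - (evenPow p (r * z) - 2))
      (Set.Icc 0 1) := by
    have hcont_q := continuous_evenPow (zero_le_one.trans hq.le)
    have hcont_p := continuous_evenPow (zero_le_one.trans (hq.le.trans hqp))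
    refine monotoneOn_of_hasDerivWithinAt_nonneg (convex_Icc 0 1) (by fun_prop)
      (fun z hz ↦ (hderiv z (by rwa [interior_Icc] at hz)).hasDerivWithinAt) fun z hz ↦ ?_
    rw [interior_Icc] at hz
    have hle := mul_oddPow_le hq hqp hp hr0 hr ⟨hz.1.le, hz.2⟩
    have hq0 : q ≠ 0 := by linarith
    have := mul_le_mul_of_nonneg_left hle (by linarith : 0 ≤ p)
    field_simp
    linarith
  have := hmono ⟨le_rfl, zero_le_one⟩ hy hy.1
  simp only [evenPow_zero, mul_zero, sub_self] at this
  exact sub_nonneg.1 this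

theorem evenPow_half_le (hq : 1 < q) (hqp : q ≤ p) (hp : p ≤ 2) (hr0 : 0 ≤ r)
    (hr : r ^ 2 * (p - 1) = q - 1) {y : ℝ} (hy : y ∈ Set.Icc 0 1) :
    evenPow p (r * y) / 2 ≤ (evenPow q y / 2) ^ (p / q) := by
  have hsub := evenPow_sub_two_le hq hqp hp hr0 hr hy
  have hbernoulli := one_add_mul_self_le_rpow_one_add (s := evenPow q y / 2 - 1)
    (by linarith [evenPow_nonneg q ⟨neg_one_lt_zero.le.trans hy.1, hy.2⟩])
    ((one_le_div (zero_lt_one.trans hq)).2 hqp)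
  rw [add_sub_cancel] at hbernoulli
  linarith

lemma exists_eq_mul_one_add_one_sub {a b : ℝ} (ha : 0 < a) (hb : 0 ≤ b) (hba : b ≤ a) :
    ∃ M y : ℝ, 0 < M ∧ y ∈ Set.Icc 0 1 ∧ a = M * (1 + y) ∧ b = M * (1 - y) := by
  have hab : 0 < a + b := add_pos_of_pos_of_nonneg ha hb
  refine ⟨(a + b) / 2, (a - b) / (a + b), half_pos hab, ⟨div_nonneg (sub_nonneg.2 hba) hab.le,
    (div_le_one hab).2 (by linarith)⟩, ?_, ?_⟩ <;> field_simp <;> ring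

lemma bonami_of_nonneg (hq : 1 < q) (hqp : q ≤ p) (hp : p ≤ 2) (hr0 : 0 ≤ r)
    (hr : r ^ 2 * (p - 1) = q - 1) {a b : ℝ} (ha : 0 ≤ a) (hb : 0 ≤ b) :
    (((1 + r) / 2 * a + (1 - r) / 2 * b) ^ p + ((1 - r) / 2 * a + (1 + r) / 2 * b) ^ p) / 2 ≤
      ((a ^ q + b ^ q) / 2) ^ (p / q) := by
  wlog hba : b ≤ a generalizing a b
  · have := this hb ha (le_of_not_ge hba)
    rwa [add_comm, add_comm (b ^ q), add_comm ((1 - r) / 2 * b), add_comm ((1 + r) / 2 * b)] at this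
  have hq0 : 0 < q := zero_lt_one.trans hq
  have hp0 : 0 < p := hq0.trans_le hqp
  rcases ha.eq_or_lt with rfl | ha
  · obtain rfl := le_antisymm hba hb
    simp only [mul_zero, add_zero, Real.zero_rpow hp0.ne', Real.zero_rpow hq0.ne', zero_div,
      Real.zero_rpow (div_pos hp0 hq0).ne', le_refl]
  obtain ⟨M, y, hM, hy, rfl, rfl⟩ := exists_eq_mul_one_add_one_sub ha hb hba
  have hadd : 0 ≤ 1 + y := by linarith [hy.1]
  have hsub : 0 ≤ 1 - y := sub_nonneg.2 hy.2
  have heven : 0 ≤ evenPow q y / 2 := by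
    unfold evenPow
    positivity
  have hry : r * y ≤ 1 := mul_le_one₀ (le_one_of_sq_mul_eq hq hqp hr) hy.1 hy.2
  have hry0 : 0 ≤ r * y := mul_nonneg hr0 hy.1
  calc _ = ((M * (1 + r * y)) ^ p + (M * (1 - r * y)) ^ p) / 2 := by ring_nf
    _ = M ^ p * (evenPow p (r * y) / 2) := by
      rw [Real.mul_rpow hM.le (by linarith), Real.mul_rpow hM.le (by linarith), evenPow]
      ring
    _ ≤ M ^ p * (evenPow q y / 2) ^ (p / q) :=
      mul_le_mul_of_nonneg_left (evenPow_half_le hq hqp hp hr0 hr hy) (by positivity)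
    _ = (M ^ q * (evenPow q y / 2)) ^ (p / q) := by
      rw [Real.mul_rpow (by positivity) heven,
        ← Real.rpow_mul hM.le, mul_div_cancel₀ _ hq0.ne']
    _ = _ := by
      rw [Real.mul_rpow hM.le hadd, Real.mul_rpow hM.le hsub, evenPow, mul_div_assoc', mul_add]

theorem norm_bonami (hq : 1 < q) (hqp : q ≤ p) (hp : p ≤ 2) (hr0 : 0 ≤ r)
    (hr : r ^ 2 * (p - 1) = q - 1) (x y : X) :
    (‖x + (r : ℂ) • y‖ ^ p + ‖x - (r : ℂ) • y‖ ^ p) / 2 ≤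
      ((‖x + y‖ ^ q + ‖x - y‖ ^ q) / 2) ^ (p / q) := by
  have hp0 : 0 ≤ p := by linarith
  have hr1 := le_one_of_sq_mul_eq hq hqp hr
  have hsplit (c d : ℝ) (hc : 0 ≤ c) (hd : 0 ≤ d) :
      ‖(c : ℂ) • (x + y) + (d : ℂ) • (x - y)‖ ≤ c * ‖x + y‖ + d * ‖x - y‖ := by
    refine (norm_add_le _ _).trans_eq ?_
    rw [norm_smul, norm_smul, Complex.norm_of_nonneg hc, Complex.norm_of_nonneg hd]
  have hadd := hsplit ((1 + r) / 2) ((1 - r) / 2) (by linarith) (by linarith)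
  have hsub := hsplit ((1 - r) / 2) ((1 + r) / 2) (by linarith) (by linarith)
  have heq_add : ((((1 + r) / 2 : ℝ) : ℂ) • (x + y) + (((1 - r) / 2 : ℝ) : ℂ) • (x - y)) =
      x + (r : ℂ) • y := by
    push_cast
    module
  have heq_sub : ((((1 - r) / 2 : ℝ) : ℂ) • (x + y) + (((1 + r) / 2 : ℝ) : ℂ) • (x - y)) =
      x - (r : ℂ) • y := by
    push_cast
    module
  rw [heq_add] at hadd
  rw [heq_sub] at hsub
  refine le_trans ?_ (bonami_of_nonneg hq hqp hp hr0 hr (norm_nonneg (x + y)) (norm_nonneg (x - y)))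
  gcongr

end Bonami

section LpNorm

variable {n : ℕ} {Y : Type*} [NormedAddCommGroup Y] {p q : ℝ}

lemma lpNorm_nonneg (p : ℝ) (f : (Fin n → Bool) → Y) : 0 ≤ lpNorm p f := by
  unfold lpNorm
  positivity

lemma lpNorm_rpow_self (hp : p ≠ 0) (f : (Fin n → Bool) → Y) :
    lpNorm p f ^ p = (2 ^ n : ℝ)⁻¹ * ∑ ε, ‖f ε‖ ^ p := by
  rw [lpNorm, ← Real.rpow_mul (by positivity), one_div_mul_cancel hp, Real.rpow_one]

lemma lpNorm_norm_rpow (hq : q ≠ 0) (s : ℝ) (f : (Fin n → Bool) → Y) :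
    lpNorm s (fun ε ↦ ‖f ε‖ ^ q) = lpNorm (q * s) f ^ q := by
  have hnorm (ε : Fin n → Bool) : ‖‖f ε‖ ^ q‖ ^ s = ‖f ε‖ ^ (q * s) := by
    rw [Real.norm_of_nonneg (by positivity), Real.rpow_mul (norm_nonneg _)]
  simp only [lpNorm, hnorm]
  rw [← Real.rpow_mul (by positivity), one_div_mul_eq_div, div_mul_cancel_left₀ hq, one_div]

lemma lpNorm_eq_mul_norm_toLp (hp : 0 < p) (f : (Fin n → Bool) → Y) :
    lpNorm p f = (2 ^ n : ℝ)⁻¹ ^ (1 / p) * ‖WithLp.toLp (ENNReal.ofReal p) f‖ := by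
  have htoReal := ENNReal.toReal_ofReal hp.le
  rw [PiLp.norm_eq_sum (by rwa [htoReal]), htoReal, lpNorm,
    Real.mul_rpow (by positivity) (by positivity)]

lemma lpNorm_midpoint_le (hp : 1 ≤ p) [NormedSpace ℝ Y] (f g : (Fin n → Bool) → Y) :
    lpNorm p (fun ε ↦ (2 : ℝ)⁻¹ • (f ε + g ε)) ≤ (lpNorm p f + lpNorm p g) / 2 := by
  have : Fact (1 ≤ ENNReal.ofReal p) := ⟨ENNReal.one_le_ofReal.2 hp⟩
  have htoLp : WithLp.toLp (ENNReal.ofReal p) (fun ε ↦ (2 : ℝ)⁻¹ • (f ε + g ε)) =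
      (2 : ℝ)⁻¹ • (WithLp.toLp (ENNReal.ofReal p) f + WithLp.toLp (ENNReal.ofReal p) g) := rfl
  have hp0 : 0 < p := zero_lt_one.trans_le hp
  rw [lpNorm_eq_mul_norm_toLp hp0, lpNorm_eq_mul_norm_toLp hp0, lpNorm_eq_mul_norm_toLp hp0,
    htoLp, norm_smul, Real.norm_of_nonneg (by positivity), ← mul_add, mul_div_assoc, inv_mul_eq_div]
  gcongr
  exact norm_add_le (WithLp.toLp (ENNReal.ofReal p) f) (WithLp.toLp (ENNReal.ofReal p) g)

lemma sum_cube_succ {M : Type*} [AddCommMonoid M] (g : (Fin (n + 1) → Bool) → M) :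
    ∑ ε, g ε = ∑ ε, (g (Fin.cons true ε) + g (Fin.cons false ε)) := by
  rw [← (Fin.consEquiv fun _ ↦ Bool).sum_comp, Fintype.sum_prod_type]
  simp only [Fin.consEquiv, Equiv.coe_fn_mk, Fintype.univ_bool, Finset.mem_singleton,
    Bool.true_eq_false, not_false_eq_true, Finset.sum_insert, Finset.sum_singleton,
    Finset.sum_add_distrib]

lemma lpNorm_rpow_succ (hp : p ≠ 0) (f : (Fin (n + 1) → Bool) → Y) :
    lpNorm p f ^ p = (lpNorm p (fun ε ↦ f (Fin.cons true ε)) ^ p +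
      lpNorm p (fun ε ↦ f (Fin.cons false ε)) ^ p) / 2 := by
  rw [lpNorm_rpow_self hp, lpNorm_rpow_self hp, lpNorm_rpow_self hp, sum_cube_succ,
    Finset.sum_add_distrib, pow_succ]
  ring

end LpNorm

section Noise

variable {n : ℕ} {p q s : ℝ} {w v : ℂ}

/-- The kernel of the noise operator: the Riesz product `∏ i, (1 + w εᵢ δᵢ) / 2`. -/
def noiseKernel (w : ℂ) (ε δ : Fin n → Bool) : ℂ := ∏ i, (1 + w * (sgn (ε i) * sgn (δ i))) / 2

/-- The noise operator with complex parameter `w`, acting on Walsh functions by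
`w_A ↦ w ^ |A| w_A`. -/
def noise (w : ℂ) (f : (Fin n → Bool) → X) (ε : Fin n → Bool) : X :=
  ∑ δ, noiseKernel w ε δ • f δ

lemma noiseKernel_comm (w : ℂ) (ε δ : Fin n → Bool) :
    noiseKernel w ε δ = noiseKernel w δ ε := by
  simp only [noiseKernel, mul_comm]

lemma conj_noiseKernel (w : ℂ) (ε δ : Fin n → Bool) :
    starRingEnd ℂ (noiseKernel w ε δ) = noiseKernel (starRingEnd ℂ w) ε δ := by
  simp only [noiseKernel, map_prod, map_div₀, map_add, map_mul, map_one, map_ofNat,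
    Complex.conj_ofReal]

lemma sum_noiseKernel_mul (w v : ℂ) (ε δ : Fin n → Bool) :
    ∑ γ, noiseKernel w ε γ * noiseKernel v γ δ = noiseKernel (w * v) ε δ := by
  have hcoord (a c : Bool) : (1 + w * v * (sgn a * sgn c)) / 2 =
      ∑ b, (1 + w * (sgn a * sgn b)) / 2 * ((1 + v * (sgn b * sgn c)) / 2) := by
    cases a <;> cases c <;> simp [sgn] <;> ring
  simp only [noiseKernel, ← Finset.prod_mul_distrib, hcoord, Fintype.prod_sum]

lemma noise_noise (w v : ℂ) (f : (Fin n → Bool) → X) :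
    noise w (noise v f) = noise (w * v) f := by
  funext ε
  simp only [noise, ← sum_noiseKernel_mul w v ε, Finset.sum_smul, Finset.smul_sum, smul_smul]
  exact Finset.sum_comm

lemma noiseKernel_one (ε δ : Fin n → Bool) :
    noiseKernel 1 ε δ = if ε = δ then 1 else 0 := by
  have hcoord (a b : Bool) : (1 + 1 * ((sgn a : ℂ) * sgn b)) / 2 = if a = b then 1 else 0 := by
    cases a <;> cases b <;> norm_num [sgn]
  simp only [noiseKernel, hcoord, Fintype.prod_boole, ← funext_iff]

lemma noise_one (f : (Fin n → Bool) → X) : noise 1 f = f := by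
  funext ε
  simp only [noise, noiseKernel_one, ite_smul, one_smul, zero_smul, Finset.sum_ite_eq,
    Finset.mem_univ, if_true]

lemma noiseKernel_eq_sum_walsh (w : ℂ) (ε δ : Fin n → Bool) :
    noiseKernel w ε δ =
      (2 ^ n : ℂ)⁻¹ * ∑ A : Finset (Fin n), w ^ A.card * (walsh A ε * walsh A δ) := by
  simp only [noiseKernel, Finset.prod_div_distrib, Finset.prod_one_add, Finset.prod_mul_distrib,
    Finset.prod_const, Finset.card_univ, Fintype.card_fin, Finset.powerset_univ, walsh,
    Complex.ofReal_prod]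
  exact div_eq_inv_mul _ _

lemma noise_eq_sum_walsh (w : ℂ) (f : (Fin n → Bool) → X) (ε : Fin n → Bool) :
    noise w f ε = ∑ A : Finset (Fin n), w ^ A.card • walsh A ε • coeff f A := by
  simp only [noise, coeff, noiseKernel_eq_sum_walsh, Finset.mul_sum, Finset.sum_smul,
    Finset.smul_sum]
  rw [Finset.sum_comm]
  refine Finset.sum_congr rfl fun A _ ↦ Finset.sum_congr rfl fun δ _ ↦ ?_
  simp only [← Complex.coe_smul, smul_smul]
  push_cast
  ring_nf

lemma noise_cons (w : ℂ) (f : (Fin (n + 1) → Bool) → X) (a : Bool) (ε : Fin n → Bool) :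
    noise w f (Fin.cons a ε) =
      ((1 + w * sgn a) / 2) • noise w (fun δ ↦ f (Fin.cons true δ)) ε +
        ((1 - w * sgn a) / 2) • noise w (fun δ ↦ f (Fin.cons false δ)) ε := by
  simp only [noise, noiseKernel, sum_cube_succ, Fin.prod_univ_succ, Fin.cons_zero, Fin.cons_succ,
    Finset.sum_add_distrib, Finset.smul_sum, smul_smul, sgn, if_true, Bool.false_eq_true, if_false,
    Complex.ofReal_one, Complex.ofReal_neg, mul_one, mul_neg, sub_eq_add_neg]

/-- The two-point inequality: the noise operator with parameter `w` is a contraction from `L_q` to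
`L_p` on the one-dimensional cube, written for the function `ε ↦ x + ε y`. -/
def TwoPointInequality (X : Type*) [NormedAddCommGroup X] [NormedSpace ℂ X] (p q : ℝ) (w : ℂ) :
    Prop :=
  ∀ x y : X, (‖x + w • y‖ ^ p + ‖x - w • y‖ ^ p) / 2 ≤
    ((‖x + y‖ ^ q + ‖x - y‖ ^ q) / 2) ^ (p / q)

/-- The noise operator with parameter `w` is a contraction from `L_q` to `L_p` on cubes of every
dimension. -/
def NoiseContractive (X : Type*) [NormedAddCommGroup X] [NormedSpace ℂ X] (p q : ℝ) (w : ℂ) :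
    Prop :=
  ∀ (n : ℕ) (f : (Fin n → Bool) → X), lpNorm p (noise w f) ≤ lpNorm q f

lemma NoiseContractive.comp (hw : NoiseContractive X p s w) (hv : NoiseContractive X s q v) :
    NoiseContractive X p q (w * v) := fun n f ↦ by
  rw [← noise_noise]
  exact (hw n _).trans (hv n f)

lemma TwoPointInequality.noise_cons_le (h : TwoPointInequality X p q w)
    (f : (Fin (n + 1) → Bool) → X) (ε : Fin n → Bool) :
    (‖noise w f (Fin.cons true ε)‖ ^ p + ‖noise w f (Fin.cons false ε)‖ ^ p) / 2 ≤
      (2⁻¹ * (‖noise w (fun δ ↦ f (Fin.cons true δ)) ε‖ ^ q +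
        ‖noise w (fun δ ↦ f (Fin.cons false δ)) ε‖ ^ q)) ^ (p / q) := by
  set u := noise w (fun δ ↦ f (Fin.cons true δ)) ε
  set v := noise w (fun δ ↦ f (Fin.cons false δ)) ε
  have htrue : noise w f (Fin.cons true ε) =
      (2 : ℂ)⁻¹ • (u + v) + w • (2 : ℂ)⁻¹ • (u - v) := by
    rw [noise_cons, sgn, if_pos rfl]
    push_cast
    module
  have hfalse : noise w f (Fin.cons false ε) =
      (2 : ℂ)⁻¹ • (u + v) - w • (2 : ℂ)⁻¹ • (u - v) := by
    rw [noise_cons, sgn, if_neg Bool.false_ne_true]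
    push_cast
    module
  have hu : (2 : ℂ)⁻¹ • (u + v) + (2 : ℂ)⁻¹ • (u - v) = u := by module
  have hv : (2 : ℂ)⁻¹ • (u + v) - (2 : ℂ)⁻¹ • (u - v) = v := by module
  have htwo := h ((2 : ℂ)⁻¹ • (u + v)) ((2 : ℂ)⁻¹ • (u - v))
  rwa [← htrue, ← hfalse, hu, hv, ← inv_mul_eq_div _ (‖u‖ ^ q + ‖v‖ ^ q)] at htwo

theorem TwoPointInequality.noiseContractive (hq : 0 < q) (hqp : q ≤ p)
    (h : TwoPointInequality X p q w) : NoiseContractive X p q w := by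
  have hp : 0 < p := hq.trans_le hqp
  intro n
  induction n with
  | zero =>
    intro f
    have hnoise : noise w f = f := by
      funext ε
      rw [noise, Fintype.sum_unique, noiseKernel, Finset.univ_eq_empty, Finset.prod_empty, one_smul]
      exact congrArg f (Subsingleton.elim _ _)
    simp only [hnoise, lpNorm, pow_zero, inv_one, one_mul, Fintype.sum_unique]
    rw [← Real.rpow_mul (norm_nonneg _), ← Real.rpow_mul (norm_nonneg _), mul_one_div_cancel hp.ne',
      mul_one_div_cancel hq.ne']
  | succ n ih =>
    intro f
    have hs : 0 < p / q := div_pos hp hq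
    set g : Bool → (Fin n → Bool) → ℝ := fun a ε ↦ ‖noise w (fun δ ↦ f (Fin.cons a δ)) ε‖ ^ q
    have hg (a : Bool) : lpNorm (p / q) (g a) ≤ lpNorm q (fun δ ↦ f (Fin.cons a δ)) ^ q := by
      rw [lpNorm_norm_rpow hq.ne', mul_div_cancel₀ _ hq.ne']
      exact Real.rpow_le_rpow (lpNorm_nonneg _ _) (ih _) hq.le
    rw [← Real.rpow_le_rpow_iff (lpNorm_nonneg _ _) (lpNorm_nonneg _ _) hp]
    calc lpNorm p (noise w f) ^ p
        ≤ lpNorm (p / q) (fun ε ↦ (2 : ℝ)⁻¹ • (g true ε + g false ε)) ^ (p / q) := by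
          rw [lpNorm_rpow_self hp.ne', lpNorm_rpow_self hs.ne', sum_cube_succ, pow_succ, mul_inv,
            mul_assoc, Finset.mul_sum]
          refine mul_le_mul_of_nonneg_left (Finset.sum_le_sum fun ε _ ↦ ?_) (by positivity)
          rw [Real.norm_of_nonneg (by positivity), inv_mul_eq_div]
          exact h.noise_cons_le f ε
      _ ≤ ((lpNorm (p / q) (g true) + lpNorm (p / q) (g false)) / 2) ^ (p / q) :=
          Real.rpow_le_rpow (lpNorm_nonneg _ _)
            (lpNorm_midpoint_le ((one_le_div hq).2 hqp) _ _) hs.le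
      _ ≤ (lpNorm q f ^ q) ^ (p / q) := by
          rw [lpNorm_rpow_succ hq.ne']
          have := lpNorm_nonneg (p / q) (g true)
          have := lpNorm_nonneg (p / q) (g false)
          gcongr <;> exact hg _
      _ = lpNorm q f ^ p := by
          rw [← Real.rpow_mul (lpNorm_nonneg _ _), mul_div_cancel₀ _ hq.ne']

end Noise

section Duality

variable {E : Type*} [NormedAddCommGroup E] [InnerProductSpace ℂ E] {n : ℕ} {p q p' q' C : ℝ}
  {w : ℂ}

lemma norm_sum_inner_le (hpq : p.HolderConjugate q) (f g : (Fin n → Bool) → E) :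
    ‖∑ ε, inner ℂ (f ε) (g ε)‖ ≤ 2 ^ n * (lpNorm p f * lpNorm q g) := by
  have hscale : (2 ^ n : ℝ)⁻¹ ^ (1 / p) * (2 ^ n : ℝ)⁻¹ ^ (1 / q) = (2 ^ n : ℝ)⁻¹ := by
    rw [← Real.rpow_add (by positivity), one_div, one_div, hpq.inv_add_inv_eq_one, Real.rpow_one]
  calc ‖∑ ε, inner ℂ (f ε) (g ε)‖
      ≤ ∑ ε, ‖f ε‖ * ‖g ε‖ := norm_sum_le_of_le _ fun ε _ ↦ norm_inner_le_norm _ _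
    _ ≤ (∑ ε, ‖f ε‖ ^ p) ^ (1 / p) * (∑ ε, ‖g ε‖ ^ q) ^ (1 / q) :=
        Real.inner_le_Lp_mul_Lq_of_nonneg _ hpq (fun _ _ ↦ norm_nonneg _)
          fun _ _ ↦ norm_nonneg _
    _ = 2 ^ n * (lpNorm p f * lpNorm q g) := by
        rw [lpNorm, lpNorm, Real.mul_rpow (by positivity) (by positivity),
          Real.mul_rpow (by positivity) (by positivity), mul_mul_mul_comm, hscale,
          mul_inv_cancel_left₀ (by positivity)]

lemma lpNorm_le_of_norm_sum_inner_le (hpq : p.HolderConjugate q) (hC : 0 ≤ C)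
    {g : (Fin n → Bool) → E}
    (h : ∀ f : (Fin n → Bool) → E, ‖∑ ε, inner ℂ (f ε) (g ε)‖ ≤ 2 ^ n * (lpNorm p f * C)) :
    lpNorm q g ≤ C := by
  have hq1 : 0 < q - 1 := sub_pos.2 hpq.symm.lt
  set f : (Fin n → Bool) → E := fun ε ↦ ((‖g ε‖ ^ (q - 2) : ℝ) : ℂ) • g ε
  have hnorm (ε : Fin n → Bool) : ‖f ε‖ = ‖g ε‖ ^ (q - 1) := by
    rw [norm_smul, Complex.norm_of_nonneg (by positivity), show q - 1 = q - 2 + 1 by ring,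
      Real.rpow_add' (norm_nonneg _) (by linarith), Real.rpow_one]
  have hinner (ε : Fin n → Bool) : inner ℂ (f ε) (g ε) = ((‖g ε‖ ^ q : ℝ) : ℂ) := by
    have hself : inner ℂ (g ε) (g ε) = ((‖g ε‖ ^ (2 : ℝ) : ℝ) : ℂ) := by
      rw [inner_self_eq_norm_sq_to_K, Real.rpow_two, Complex.ofReal_pow]
      rfl
    rw [inner_smul_left, Complex.conj_ofReal, hself, ← Complex.ofReal_mul,
      ← Real.rpow_add' (norm_nonneg _) (by linarith), sub_add_cancel]
  have hf : lpNorm p f = lpNorm q g ^ (q - 1) := by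
    have hfg : lpNorm p f = lpNorm p fun ε ↦ ‖g ε‖ ^ (q - 1) := by
      simp only [lpNorm, hnorm, Real.norm_of_nonneg (Real.rpow_nonneg (norm_nonneg _) _)]
    rw [hfg, lpNorm_norm_rpow hq1.ne', hpq.symm.sub_one_mul_conj]
  have hsum : ‖∑ ε, inner ℂ (f ε) (g ε)‖ = 2 ^ n * lpNorm q g ^ q := by
    simp only [hinner]
    rw [← Complex.ofReal_sum, Complex.norm_of_nonneg (by positivity),
      lpNorm_rpow_self hpq.symm.ne_zero, mul_inv_cancel_left₀ (by positivity)]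
  have hle := h f
  rw [hsum, hf, mul_le_mul_iff_right₀ (by positivity)] at hle
  rcases (lpNorm_nonneg q g).eq_or_lt with h0 | h0
  · rwa [← h0]
  · have hsplit : lpNorm q g ^ q = lpNorm q g ^ (q - 1) * lpNorm q g := by
      rw [← Real.rpow_add_one h0.ne', sub_add_cancel]
    exact le_of_mul_le_mul_left (hsplit ▸ hle) (by positivity)

lemma sum_inner_noise (w : ℂ) (f g : (Fin n → Bool) → E) :
    ∑ ε, inner ℂ (f ε) (noise w g ε) = ∑ ε, inner ℂ (noise (starRingEnd ℂ w) f ε) (g ε) := by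
  simp only [noise, inner_sum, sum_inner, inner_smul_left, inner_smul_right, conj_noiseKernel,
    Complex.conj_conj]
  rw [Finset.sum_comm]
  simp only [noiseKernel_comm w]

lemma NoiseContractive.dual (hp : p.HolderConjugate p') (hq : q.HolderConjugate q')
    (h : NoiseContractive E p q w) : NoiseContractive E q' p' (starRingEnd ℂ w) := fun n g ↦ by
  refine lpNorm_le_of_norm_sum_inner_le hq (lpNorm_nonneg _ _) fun f ↦ ?_
  rw [sum_inner_noise, Complex.conj_conj]
  refine (norm_sum_inner_le hp _ _).trans ?_
  have := lpNorm_nonneg p' g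
  gcongr
  exact h n f

end Duality

section Hypercontractivity

variable {E : Type*} [NormedAddCommGroup E] [InnerProductSpace ℂ E] {p q r : ℝ} {ζ : ℂ}

lemma twoPointInequality_of_re_eq (hp : 2 ≤ p) (hζ : ζ.re = (1 - 2 / p) * ‖ζ‖) :
    TwoPointInequality E p p ((ζ - 1) / (ζ + 1)) := fun x y ↦ by
  have hp0 : 0 < p := two_pos.trans_le hp
  have hre : 0 ≤ ζ.re := hζ ▸ mul_nonneg (sub_nonneg.2 ((div_le_one hp0).2 hp)) (norm_nonneg _)
  have hne : 1 + ζ ≠ 0 := fun h ↦ by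
    have := congrArg Complex.re h
    rw [Complex.add_re, Complex.one_re, Complex.zero_re] at this
    linarith
  have hw : (ζ - 1) / (ζ + 1) = (1 + ζ)⁻¹ * (ζ - 1) := by rw [div_eq_inv_mul, add_comm]
  have hcancel (z : E) : (1 + ζ)⁻¹ • (1 + ζ) • z = z := inv_smul_smul₀ hne z
  have hadd : x + ((ζ - 1) / (ζ + 1)) • y = (1 + ζ)⁻¹ • (ζ • (x + y) + (x - y)) := by
    rw [hw]
    nth_rw 1 [← hcancel x]
    module
  have hsub : x - ((ζ - 1) / (ζ + 1)) • y = (1 + ζ)⁻¹ • ((x + y) + ζ • (x - y)) := by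
    rw [hw]
    nth_rw 1 [← hcancel x]
    module
  have hpos : 0 < ‖1 + ζ‖ := norm_pos_iff.2 hne
  rw [hadd, hsub, norm_smul, norm_smul, norm_inv, div_self hp0.ne', Real.rpow_one,
    Real.mul_rpow (by positivity) (by positivity), Real.mul_rpow (by positivity) (by positivity),
    ← mul_add, Real.inv_rpow hpos.le]
  gcongr
  exact (inv_mul_le_iff₀ (by positivity)).2 (norm_rpow_add_le_of_re_eq hp hζ _ _)

theorem noiseContractive_of_re_eq (hp : 1 < p) (hζ : ζ.re = |1 - 2 / p| * ‖ζ‖) :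
    NoiseContractive E p p ((ζ - 1) / (ζ + 1)) := by
  have hp0 : 0 < p := zero_lt_one.trans hp
  rcases le_total 2 p with h2 | h2
  · rw [abs_of_nonneg (sub_nonneg.2 ((div_le_one hp0).2 h2))] at hζ
    exact (twoPointInequality_of_re_eq h2 hζ).noiseContractive hp0 le_rfl
  · rw [abs_of_nonpos (sub_nonpos.2 ((one_le_div hp0).2 h2))] at hζ
    have hconj := Real.HolderConjugate.conjExponent hp
    have h2' : 2 ≤ p.conjExponent := (le_div_iff₀ (by linarith)).2 (by linarith)
    have hcoef : 1 - 2 / p.conjExponent = -(1 - 2 / p) := by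
      have := hconj.inv_add_inv_eq_one
      rw [div_eq_mul_inv, div_eq_mul_inv]
      linarith
    have hζ' : (starRingEnd ℂ ζ).re = (1 - 2 / p.conjExponent) * ‖starRingEnd ℂ ζ‖ := by
      rw [Complex.conj_re, RCLike.norm_conj, hcoef, hζ]
    have hdual := ((twoPointInequality_of_re_eq (E := E) h2' hζ').noiseContractive
      (by linarith) le_rfl).dual hconj.symm hconj.symm
    simpa only [map_div₀, map_sub, map_add, map_one, Complex.conj_conj] using hdual

lemma noiseContractive_of_le_two (hq : 1 < q) (hqp : q ≤ p) (hp : p ≤ 2) (hr0 : 0 ≤ r)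
    (hr : r ^ 2 * (p - 1) = q - 1) : NoiseContractive X p q r :=
  TwoPointInequality.noiseContractive (zero_lt_one.trans hq) hqp
    fun x y ↦ norm_bonami hq hqp hp hr0 hr x y

lemma noiseContractive_of_two_le (hq : 2 ≤ q) (hqp : q ≤ p) (hr0 : 0 ≤ r)
    (hr : r ^ 2 * (p - 1) = q - 1) : NoiseContractive E p q r := by
  have hp1 : 0 < p - 1 := by linarith
  have hq1 : 0 < q - 1 := by linarith
  have hp' := Real.HolderConjugate.conjExponent (p := p) (by linarith)
  have hq' := Real.HolderConjugate.conjExponent (p := q) (by linarith)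
  have hsub {s : ℝ} (hs : 0 < s - 1) : s.conjExponent - 1 = (s - 1)⁻¹ := by
    rw [Real.conjExponent]
    field_simp
    ring
  have hdual : NoiseContractive E q.conjExponent p.conjExponent r := by
    refine noiseContractive_of_le_two hp'.symm.lt ?_ ?_ hr0 ?_
    · have := inv_anti₀ hq1 (sub_le_sub_right hqp 1)
      linarith [hsub hp1, hsub hq1]
    · have := inv_le_one_of_one_le₀ (by linarith : 1 ≤ q - 1)
      linarith [hsub hq1]
    · rw [hsub hp1, hsub hq1, ← hr]
      have : r ≠ 0 := by
        rintro rfl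
        linarith
      field_simp
  simpa only [Complex.conj_ofReal] using hdual.dual hq'.symm hp'.symm

theorem noiseContractive_of_sq_mul_eq (hq : 1 < q) (hqp : q ≤ p) (hr0 : 0 ≤ r)
    (hr : r ^ 2 * (p - 1) = q - 1) : NoiseContractive E p q r := by
  rcases le_total p 2 with hp2 | hp2
  · exact noiseContractive_of_le_two hq hqp hp2 hr0 hr
  rcases le_total 2 q with hq2 | hq2
  · exact noiseContractive_of_two_le hq2 hqp hr0 hr
  have hp1 : 0 < p - 1 := by linarith
  have hlow : NoiseContractive E 2 q (√(q - 1) : ℝ) :=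
    noiseContractive_of_le_two hq hq2 le_rfl (Real.sqrt_nonneg _) (by
      rw [Real.sq_sqrt (by linarith)]
      ring)
  have hhigh : NoiseContractive E p 2 (√(p - 1)⁻¹ : ℝ) :=
    noiseContractive_of_two_le le_rfl hp2 (Real.sqrt_nonneg _) (by
      rw [Real.sq_sqrt (by positivity), inv_mul_cancel₀ hp1.ne']
      ring)
  have hfactor : √(p - 1)⁻¹ * √(q - 1) = r := by
    rw [← Real.sqrt_mul (by positivity), ← hr, mul_left_comm, inv_mul_cancel₀ hp1.ne', mul_one,
      Real.sqrt_sq hr0]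
  have := hhigh.comp hlow
  rwa [← Complex.ofReal_mul, hfactor] at this

end Hypercontractivity

section CayleyTransform

open Filter Topology

variable {b : ℝ} {z : ℂ}

lemma add_one_ne_zero_of_re_nonneg (hz : 0 ≤ z.re) : z + 1 ≠ 0 := fun h ↦ by
  have := congrArg Complex.re h
  rw [Complex.add_re, Complex.one_re, Complex.zero_re] at this
  linarith

lemma norm_sub_one_div_add_one_le (hz : 0 ≤ z.re) : ‖(z - 1) / (z + 1)‖ ≤ 1 := by
  rw [norm_div]
  refine div_le_one_of_le₀ (le_of_sq_le_sq ?_ (norm_nonneg _)) (norm_nonneg _)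
  simp only [Complex.sq_norm, Complex.normSq_apply, Complex.sub_re, Complex.add_re, Complex.sub_im,
    Complex.add_im, Complex.one_re, Complex.one_im]
  linarith

lemma norm_sub_one_div_add_one_of_re_eq_zero (hz : z.re = 0) : ‖(z - 1) / (z + 1)‖ = 1 := by
  have hne : ‖z + 1‖ ≠ 0 := norm_ne_zero_iff.2 (add_one_ne_zero_of_re_nonneg hz.ge)
  rw [norm_div, div_eq_one_iff_eq hne, ← sq_eq_sq₀ (norm_nonneg _) (norm_nonneg _)]
  simp only [Complex.sq_norm, Complex.normSq_apply, Complex.sub_re, Complex.add_re, Complex.sub_im,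
    Complex.add_im, Complex.one_re, Complex.one_im, hz]
  ring

lemma norm_add_one_div_sub_one_le_three (hz : 2 ≤ ‖z‖) : ‖(z + 1) / (z - 1)‖ ≤ 3 := by
  have hadd : ‖z + 1‖ ≤ ‖z‖ + 1 := norm_one (α := ℂ) ▸ norm_add_le z 1
  have hsub : ‖z‖ - 1 ≤ ‖z - 1‖ := norm_one (α := ℂ) ▸ norm_sub_norm_le z 1
  rw [norm_div, div_le_iff₀ (by linarith)]
  linarith

lemma cpow_ne_one (hb0 : 0 < b) (hb2 : b < 2) (hz : 0 ≤ z.re) (hz1 : z ≠ 1) :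
    z ^ (b : ℂ) ≠ 1 := fun h ↦ hz1 <| by
  have him : (Complex.log z * b).im = z.arg * b := by rw [Complex.im_mul_ofReal, Complex.log_im]
  have harg : |z.arg * b| < Real.pi := by
    rw [abs_mul, abs_of_pos hb0]
    calc |z.arg| * b ≤ Real.pi / 2 * b := by
          gcongr
          exact Complex.abs_arg_le_pi_div_two_iff.2 hz
      _ < Real.pi := by linarith [mul_lt_mul_of_pos_left hb2 Real.pi_pos]
  rw [abs_lt, ← him] at harg
  have hb : (b : ℂ) ≠ 0 := Complex.ofReal_ne_zero.2 hb0.ne'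
  calc z = (z ^ (b : ℂ)) ^ (b : ℂ)⁻¹ := by
        rw [← Complex.cpow_mul _ harg.1 harg.2.le, mul_inv_cancel₀ hb, Complex.cpow_one]
    _ = 1 := by rw [h, Complex.one_cpow]

lemma re_cpow_of_re_eq_zero (hb : b ≠ 0) (hz : z.re = 0) :
    (z ^ (b : ℂ)).re = Real.cos (Real.pi / 2 * b) * ‖z ^ (b : ℂ)‖ := by
  rcases eq_or_ne z 0 with rfl | hz0
  · rw [Complex.zero_cpow (Complex.ofReal_ne_zero.2 hb), norm_zero, mul_zero, Complex.zero_re]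
  have him : z.im ≠ 0 := fun h ↦ hz0 (Complex.ext hz h)
  have harg : |z.arg| = Real.pi / 2 := by
    rcases him.lt_or_gt with h | h
    · rw [Complex.arg_eq_neg_pi_div_two_iff.2 ⟨hz, h⟩, abs_neg, abs_of_pos Real.pi_div_two_pos]
    · rw [Complex.arg_eq_pi_div_two_iff.2 ⟨hz, h⟩, abs_of_pos Real.pi_div_two_pos]
  rw [Complex.cpow_ofReal_re, Complex.norm_cpow_real, mul_comm, ← harg, ← Real.cos_abs, abs_mul,
    ← Real.cos_abs (|z.arg| * b), abs_mul, abs_abs]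

lemma diffContOnCl_cpow (hb : 0 < b) :
    DiffContOnCl ℂ (fun z : ℂ ↦ z ^ (b : ℂ)) {z | 0 < z.re} := by
  refine ⟨fun z hz ↦ (differentiableAt_id.cpow_const (.inl hz)).differentiableWithinAt, ?_⟩
  rw [Complex.closure_setOfPred_lt_re]
  exact fun z hz ↦ (Complex.continuousAt_cpow_const_of_re_pos (.inl hz)
    (by rwa [Complex.ofReal_re])).continuousWithinAt

lemma diffContOnCl_dslope {E : Type*} [NormedAddCommGroup E] [NormedSpace ℂ E] [CompleteSpace E]
    {F : ℂ → E} {s : Set ℂ} (hF : DiffContOnCl ℂ F s) (hs : s ∈ 𝓝 z) :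
    DiffContOnCl ℂ (dslope F z) s :=
  ⟨(Complex.differentiableOn_dslope hs).2 hF.1,
    (continuousOn_dslope (mem_of_superset hs subset_closure)).2 ⟨hF.2, hF.differentiableAt' hs⟩⟩

/-- The extension across `z = 1` of the product of `(z - 1) / (z + 1)` and
`(z ^ b + 1) / (z ^ b - 1)`, holomorphic in the right half-plane for `0 < b < 2`. -/
def cayleyProd (b : ℝ) (z : ℂ) : ℂ :=
  (z ^ (b : ℂ) + 1) * (dslope (fun z : ℂ ↦ z ^ (b : ℂ)) 1 z * (z + 1))⁻¹

lemma cayleyProd_of_ne_one (b : ℝ) (hz : z ≠ 1) :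
    cayleyProd b z = (z - 1) / (z + 1) * ((z ^ (b : ℂ) + 1) / (z ^ (b : ℂ) - 1)) := by
  rw [cayleyProd, dslope_of_ne _ hz, slope_def_field, Complex.one_cpow, mul_inv, inv_div]
  ring

lemma dslope_cpow_ne_zero (hb0 : 0 < b) (hb2 : b < 2) (hz : 0 ≤ z.re) :
    dslope (fun z : ℂ ↦ z ^ (b : ℂ)) 1 z ≠ 0 := by
  rcases eq_or_ne z 1 with rfl | hz1
  · have hderiv : HasDerivAt (fun z : ℂ ↦ z ^ (b : ℂ)) (b * 1 ^ ((b : ℂ) - 1) * 1) 1 :=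
      (hasDerivAt_id (1 : ℂ)).cpow_const (.inl zero_lt_one)
    rw [dslope_same, hderiv.deriv, Complex.one_cpow, mul_one, mul_one]
    exact Complex.ofReal_ne_zero.2 hb0.ne'
  · rw [dslope_of_ne _ hz1, slope_def_field, Complex.one_cpow]
    exact div_ne_zero (sub_ne_zero.2 (cpow_ne_one hb0 hb2 hz hz1)) (sub_ne_zero.2 hz1)

lemma diffContOnCl_cayleyProd (hb0 : 0 < b) (hb2 : b < 2) :
    DiffContOnCl ℂ (cayleyProd b) {z | 0 < z.re} := by
  have hs : {z : ℂ | 0 < z.re} ∈ 𝓝 1 :=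
    (isOpen_lt continuous_const Complex.continuous_re).mem_nhds
      (zero_lt_one' ℝ)
  have hpow := diffContOnCl_cpow hb0
  have hadd : DiffContOnCl ℂ (fun z : ℂ ↦ z + 1) {z | 0 < z.re} :=
    (differentiable_id.add_const 1).diffContOnCl
  refine (hpow.add_const 1).smul (((diffContOnCl_dslope hpow hs).smul hadd).inv fun z hz ↦ ?_)
  rw [Complex.closure_setOfPred_lt_re] at hz
  exact mul_ne_zero (dslope_cpow_ne_zero hb0 hb2 hz) (add_one_ne_zero_of_re_nonneg hz)

lemma diffContOnCl_sub_one_div_add_one :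
    DiffContOnCl ℂ (fun z : ℂ ↦ (z - 1) / (z + 1)) {z | 0 < z.re} := by
  refine DifferentiableOn.diffContOnCl fun z hz ↦ ?_
  rw [Complex.closure_setOfPred_lt_re] at hz
  exact ((differentiableAt_id.sub_const (1 : ℂ)).fun_div (differentiableAt_id.add_const (1 : ℂ))
    (add_one_ne_zero_of_re_nonneg hz)).differentiableWithinAt

variable {E ι : Type*} [NormedAddCommGroup E] [NormedSpace ℂ E] {S : Finset ι} {m : ι → ℕ}
  {d : ℕ} {C s : ℝ}

/-- The extension across `z = 1` of the product of `((z - 1) / (z + 1)) ^ d` and the vector-valued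
polynomial `∑ i ∈ S, w ^ m i • v i` at `w = (z ^ b + 1) / (z ^ b - 1)`. -/
def cayleySum (S : Finset ι) (m : ι → ℕ) (d : ℕ) (v : ι → E) (b : ℝ) (z : ℂ) : E :=
  ∑ i ∈ S, (cayleyProd b z ^ m i * ((z - 1) / (z + 1)) ^ (d - m i)) • v i

lemma cayleySum_of_ne_one (hm : ∀ i ∈ S, m i ≤ d) (v : ι → E) (b : ℝ) (hz : z ≠ 1) :
    cayleySum S m d v b z = ((z - 1) / (z + 1)) ^ d •
      ∑ i ∈ S, ((z ^ (b : ℂ) + 1) / (z ^ (b : ℂ) - 1)) ^ m i • v i := by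
  rw [cayleySum, Finset.smul_sum]
  refine Finset.sum_congr rfl fun i hi ↦ ?_
  rw [smul_smul, cayleyProd_of_ne_one b hz, mul_pow, mul_right_comm, ← pow_add,
    Nat.add_sub_cancel' (hm i hi)]

lemma diffContOnCl_cayleySum (S : Finset ι) (m : ι → ℕ) (d : ℕ) (v : ι → E) (hb0 : 0 < b)
    (hb2 : b < 2) : DiffContOnCl ℂ (cayleySum S m d v b) {z | 0 < z.re} := by
  have hterm (i : ι) : DiffContOnCl ℂ
      (fun z ↦ (cayleyProd b z ^ m i * ((z - 1) / (z + 1)) ^ (d - m i)) • v i) {z | 0 < z.re} :=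
    (((differentiable_pow _).comp_diffContOnCl (diffContOnCl_cayleyProd hb0 hb2)).smul
      ((differentiable_pow _).comp_diffContOnCl diffContOnCl_sub_one_div_add_one)).smul_const _
  exact ⟨.fun_sum fun i _ ↦ (hterm i).1, continuousOn_finsetSum _ fun i _ ↦ (hterm i).2⟩

lemma norm_cayleySum_le (hm : ∀ i ∈ S, m i ≤ d) (v : ι → E) (hb1 : 1 ≤ b) (hz : 0 ≤ z.re)
    (hz2 : 2 ≤ ‖z‖) : ‖cayleySum S m d v b z‖ ≤ ∑ i ∈ S, 3 ^ m i * ‖v i‖ := by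
  have hz1 : z ≠ 1 := by
    rintro rfl
    norm_num at hz2
  have hpow : 2 ≤ ‖z ^ (b : ℂ)‖ := by
    rw [Complex.norm_cpow_real]
    exact hz2.trans (Real.self_le_rpow_of_one_le (one_le_two.trans hz2) hb1)
  rw [cayleySum_of_ne_one hm v b hz1, norm_smul, norm_pow]
  refine (mul_le_of_le_one_left (norm_nonneg _)
    (pow_le_one₀ (norm_nonneg _) (norm_sub_one_div_add_one_le hz))).trans ?_
  refine norm_sum_le_of_le _ fun i _ ↦ ?_
  rw [norm_smul, norm_pow]
  gcongr
  exact norm_add_one_div_sub_one_le_three hpow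

lemma norm_cayleySum_le_of_re_eq_zero (hm : ∀ i ∈ S, m i ≤ d) {v : ι → E} (hb : b ≠ 0)
    (hbound : ∀ ω : ℂ, ω.re = Real.cos (Real.pi / 2 * b) * ‖ω‖ →
      ‖∑ i ∈ S, ((ω + 1) / (ω - 1)) ^ m i • v i‖ ≤ C) (hz : z.re = 0) :
    ‖cayleySum S m d v b z‖ ≤ C := by
  have hz1 : z ≠ 1 := by
    rintro rfl
    exact one_ne_zero hz
  rw [cayleySum_of_ne_one hm v b hz1, norm_smul, norm_pow,
    norm_sub_one_div_add_one_of_re_eq_zero hz, one_pow, one_mul]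
  exact hbound _ (re_cpow_of_re_eq_zero hb hz)

lemma norm_cayleySum_le_of_nonneg (hm : ∀ i ∈ S, m i ≤ d) {v : ι → E} (hb1 : 1 ≤ b) (hb2 : b < 2)
    (hbound : ∀ ω : ℂ, ω.re = Real.cos (Real.pi / 2 * b) * ‖ω‖ →
      ‖∑ i ∈ S, ((ω + 1) / (ω - 1)) ^ m i • v i‖ ≤ C) (hz : 0 ≤ z.re) :
    ‖cayleySum S m d v b z‖ ≤ C := by
  have hb0 : 0 < b := zero_lt_one.trans_le hb1
  refine PhragmenLindelof.right_half_plane_of_bounded_on_real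
    (diffContOnCl_cayleySum S m d v hb0 hb2) ⟨1, one_lt_two, 0, ?_⟩
    ⟨∑ i ∈ S, 3 ^ m i * ‖v i‖, eventually_map.2 ?_⟩
    (fun x ↦ norm_cayleySum_le_of_re_eq_zero hm hb0.ne' hbound (by simp)) hz
  · refine Asymptotics.IsBigO.of_bound (∑ i ∈ S, 3 ^ m i * ‖v i‖)
      (eventually_inf_principal.2 ?_)
    filter_upwards [tendsto_norm_cobounded_atTop.eventually (eventually_ge_atTop 2)] with z hz2 hz
    simpa using norm_cayleySum_le hm v hb1 (le_of_lt hz) hz2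
  · filter_upwards [eventually_ge_atTop 2] with x hx
    have hx0 : 0 ≤ x := two_pos.le.trans hx
    exact norm_cayleySum_le hm v hb1 (by rwa [Complex.ofReal_re])
      (by rwa [Complex.norm_of_nonneg hx0])

theorem norm_sum_cayley_pow_smul_le (hm : ∀ i ∈ S, m i ≤ d) {v : ι → E} (hb1 : 1 ≤ b)
    (hb2 : b < 2) (hbound : ∀ ω : ℂ, ω.re = Real.cos (Real.pi / 2 * b) * ‖ω‖ →
      ‖∑ i ∈ S, ((ω + 1) / (ω - 1)) ^ m i • v i‖ ≤ C) (hs : 1 < s) :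
    ‖∑ i ∈ S, (((s : ℂ) ^ (b : ℂ) + 1) / ((s : ℂ) ^ (b : ℂ) - 1)) ^ m i • v i‖ ≤
      ((s + 1) / (s - 1)) ^ d * C := by
  have hratio : 0 < (s - 1) / (s + 1) := div_pos (by linarith) (by linarith)
  have hnorm : ‖((s : ℂ) - 1) / (s + 1)‖ = (s - 1) / (s + 1) := by
    rw [← Complex.norm_of_nonneg hratio.le]
    push_cast
    rfl
  have hsum := norm_cayleySum_le_of_nonneg (z := s) hm hb1 hb2 hbound
    (by linarith [Complex.ofReal_re s])
  rw [cayleySum_of_ne_one hm v b (Complex.ofReal_ne_one.2 hs.ne'), norm_smul, norm_pow,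
    hnorm] at hsum
  rwa [← inv_div (s - 1), inv_pow, ← div_eq_inv_mul, le_div_iff₀' (by positivity)]

end CayleyTransform

section MomentComparison

variable {n d : ℕ} {p q r b s : ℝ}

lemma toLp_noise_mul_of_degLE (P : ℝ≥0∞) {f : (Fin n → Bool) → X} (hf : degLE f d) (w v : ℂ) :
    WithLp.toLp P (noise (w * v) f) = ∑ A : Finset (Fin n) with A.card ≤ d,
      w ^ A.card • WithLp.toLp P (fun ε ↦ v ^ A.card • walsh A ε • coeff f A) := by
  ext ε
  simp only [noise_eq_sum_walsh, mul_pow, mul_smul, WithLp.ofLp_sum, WithLp.ofLp_smul,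
    Finset.sum_apply, Pi.smul_apply]
  refine (Finset.sum_filter_of_ne fun A _ hA ↦ ?_).symm
  contrapose! hA
  rw [hf A hA, smul_zero, smul_zero, smul_zero]

theorem lpNorm_le_of_noiseContractive (hp : 1 ≤ p) (hb1 : 1 ≤ b) (hb2 : b < 2)
    (hnoise : ∀ ω : ℂ, ω.re = Real.cos (Real.pi / 2 * b) * ‖ω‖ →
      NoiseContractive X p q ((ω + 1) / (ω - 1) * r))
    (hs : 1 < s) (hsr : (s ^ b + 1) / (s ^ b - 1) * r = 1)
    {f : (Fin n → Bool) → X} (hf : degLE f d) :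
    lpNorm p f ≤ ((s + 1) / (s - 1)) ^ d * lpNorm q f := by
  have : Fact (1 ≤ ENNReal.ofReal p) := ⟨ENNReal.one_le_ofReal.2 hp⟩
  have hp0 : 0 < p := zero_lt_one.trans_le hp
  set c : ℝ := (2 ^ n : ℝ)⁻¹ ^ (1 / p)
  have hc : 0 < c := by positivity
  have hsum := norm_sum_cayley_pow_smul_le (C := c⁻¹ * lpNorm q f)
    (S := {A : Finset (Fin n) | A.card ≤ d})
    (v := fun A ↦ WithLp.toLp (ENNReal.ofReal p) fun ε ↦ (r : ℂ) ^ A.card • walsh A ε • coeff f A)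
    (fun A hA ↦ (Finset.mem_filter.1 hA).2) hb1 hb2
    (fun ω hω ↦ by
      rw [← toLp_noise_mul_of_degLE _ hf _ r, le_inv_mul_iff₀ hc, ← lpNorm_eq_mul_norm_toLp hp0]
      exact hnoise ω hω n f) hs
  have hone : ((s : ℂ) ^ (b : ℂ) + 1) / ((s : ℂ) ^ (b : ℂ) - 1) * r = 1 := by
    rw [← Complex.ofReal_cpow (zero_lt_one.trans hs).le]
    exact_mod_cast hsr
  rw [← toLp_noise_mul_of_degLE _ hf, hone, noise_one, mul_left_comm, le_inv_mul_iff₀ hc,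
    ← lpNorm_eq_mul_norm_toLp hp0] at hsum
  exact hsum

lemma div_add_one_div_div_sub_one {x y : ℝ} (hy : y ≠ 0) :
    (x / y + 1) / (x / y - 1) = (x + y) / (x - y) := by
  rw [div_add_one hy, div_sub_one hy, div_div_div_cancel_right₀ hy]

lemma cos_arcsin_two_mul_sqrt_sub_one_div (hp : 1 ≤ p) :
    Real.cos (Real.arcsin (2 * √(p - 1) / p)) = |1 - 2 / p| := by
  have hp0 : p ≠ 0 := by positivity
  rw [Real.cos_arcsin, ← Real.sqrt_sq_eq_abs, div_pow, mul_pow, Real.sq_sqrt (sub_nonneg.2 hp)]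
  congr 1
  field_simp
  ring

variable {E : Type*} [NormedAddCommGroup E] [InnerProductSpace ℂ E]

lemma noiseContractive_cayley_mul (hq : 1 < q) (hqp : q ≤ p) (hr0 : 0 ≤ r)
    (hr : r ^ 2 * (p - 1) = q - 1) {ω : ℂ} (hω : ω.re = -|1 - 2 / p| * ‖ω‖) :
    NoiseContractive E p q ((ω + 1) / (ω - 1) * r) := by
  have hneg : (ω + 1) / (ω - 1) = (-ω - 1) / (-ω + 1) := by
    rw [← neg_div_neg_eq, neg_add', neg_sub', sub_neg_eq_add]
  rw [hneg]
  refine (noiseContractive_of_re_eq (hq.trans_le hqp) ?_).comp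
    (noiseContractive_of_sq_mul_eq hq hqp hr0 hr)
  rw [Complex.neg_re, norm_neg, hω, neg_mul, neg_neg]

theorem lpNorm_le_of_cos_eq (hq : 1 < q) (hqp : q < p) (hb1 : 1 ≤ b) (hb2 : b < 2)
    (hcos : Real.cos (Real.pi / 2 * b) = -|1 - 2 / p|)
    {f : (Fin n → Bool) → E} (hf : degLE f d) :
    lpNorm p f ≤ (((√(p - 1) + √(q - 1)) ^ b⁻¹ + (√(p - 1) - √(q - 1)) ^ b⁻¹) /
      ((√(p - 1) + √(q - 1)) ^ b⁻¹ - (√(p - 1) - √(q - 1)) ^ b⁻¹)) ^ d * lpNorm q f := by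
  have hb0 : 0 < b := zero_lt_one.trans_le hb1
  have hp1 : 0 < p - 1 := by linarith
  have hα : 0 < √(p - 1) := Real.sqrt_pos.2 hp1
  have hβ : 0 < √(q - 1) := Real.sqrt_pos.2 (sub_pos.2 hq)
  have hβα : √(q - 1) < √(p - 1) := Real.sqrt_lt_sqrt (by linarith) (by linarith)
  have hr : (√(q - 1) / √(p - 1)) ^ 2 * (p - 1) = q - 1 := by
    rw [div_pow, Real.sq_sqrt (by linarith), Real.sq_sqrt hp1.le, div_mul_cancel₀ _ hp1.ne']
  set α := √(p - 1)
  set β := √(q - 1)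
  have hY : 0 < (α - β) ^ b⁻¹ := Real.rpow_pos_of_pos (sub_pos.2 hβα) _
  have hs : 1 < (α + β) ^ b⁻¹ / (α - β) ^ b⁻¹ := by
    rw [one_lt_div hY]
    exact Real.rpow_lt_rpow (by linarith) (by linarith) (by positivity)
  rw [← div_add_one_div_div_sub_one hY.ne']
  refine lpNorm_le_of_noiseContractive (r := β / α) (by linarith) hb1 hb2 (fun ω hω ↦
    noiseContractive_cayley_mul hq hqp.le (by positivity) hr (hcos ▸ hω)) hs ?_ hf
  rw [← Real.div_rpow (by linarith) (by linarith), Real.rpow_inv_rpow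
    (div_nonneg (by linarith) (by linarith)) hb0.ne', div_add_one_div_div_sub_one (by linarith),
    add_add_sub_cancel, add_sub_sub_cancel, ← two_mul, ← two_mul, mul_div_mul_left _ _ two_ne_zero,
    div_mul_div_cancel₀ hβ.ne', div_self hα.ne']

theorem stmt11_general (p q : ℝ) (hq : 1 < q) (hqp : q < p) (θ : ℝ)
    (hθ : θ = 2 * Real.arcsin (2 * Real.sqrt (p - 1) / p)) (n d : ℕ)
    (f : (Fin n → Bool) → E) (hf : degLE f d) :
    lpNorm p f ≤
      (((Real.sqrt (p - 1) + Real.sqrt (q - 1)) ^ (Real.pi / (2 * Real.pi - θ)) +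
          (Real.sqrt (p - 1) - Real.sqrt (q - 1)) ^ (Real.pi / (2 * Real.pi - θ))) /
        ((Real.sqrt (p - 1) + Real.sqrt (q - 1)) ^ (Real.pi / (2 * Real.pi - θ)) -
          (Real.sqrt (p - 1) - Real.sqrt (q - 1)) ^ (Real.pi / (2 * Real.pi - θ)))) ^ d *
        lpNorm q f := by
  have hp1 : 0 < p - 1 := by linarith
  have harcsin_pos : 0 < Real.arcsin (2 * √(p - 1) / p) :=
    Real.arcsin_pos.2 (div_pos (by positivity) (by linarith))
  have harcsin_le := Real.arcsin_le_pi_div_two (2 * √(p - 1) / p)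
  have hcos : Real.cos (Real.pi / 2 * ((2 * Real.pi - θ) / Real.pi)) = -|1 - 2 / p| := by
    rw [← cos_arcsin_two_mul_sqrt_sub_one_div (by linarith), ← Real.cos_pi_sub, hθ]
    congr 1
    field_simp
  rw [← inv_div (2 * Real.pi - θ)]
  exact lpNorm_le_of_cos_eq hq hqp ((one_le_div Real.pi_pos).2 (by linarith))
    ((div_lt_iff₀ Real.pi_pos).2 (by linarith)) hcos hf

end MomentComparison

/-- **Improved scalar moment comparison for low-degree Walsh polynomials.** -/
theorem stmt11 (p q : ℝ) (hq : 1 < q) (hqp : q < p) (θ : ℝ)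
    (hθ : θ = 2 * Real.arcsin (2 * Real.sqrt (p - 1) / p))
    (n d : ℕ) (hd : 1 ≤ d) (hdn : d ≤ n)
    (f : (Fin n → Bool) → ℂ) (hf : degLE f d) :
    lpNorm p f ≤
      (((Real.sqrt (p - 1) + Real.sqrt (q - 1)) ^ (Real.pi / (2 * Real.pi - θ)) +
          (Real.sqrt (p - 1) - Real.sqrt (q - 1)) ^ (Real.pi / (2 * Real.pi - θ))) /
        ((Real.sqrt (p - 1) + Real.sqrt (q - 1)) ^ (Real.pi / (2 * Real.pi - θ)) -
          (Real.sqrt (p - 1) - Real.sqrt (q - 1)) ^ (Real.pi / (2 * Real.pi - θ)))) ^ d *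
        lpNorm q f := by
  exact stmt11_general p q hq hqp θ hθ n d f hf

end HammingCube
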